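/- arXiv:1308.3267 — 3 statements merged into one kernel-verified Lean document; each statement's English description precedes it below -/
import Mathlib

section
/- Let N be a positive integer; write N = σ²q with σ, q positive integers and q squarefree. Let ε be the greatest common divisor of all integers a − d where a, d are the diagonal entries of some matrix in Γ₀(N), and set v = gcd(σ, ε). Then a matrix g ∈ SL(2,ℝ) normalizes the subgroup ±Γ₀(N) of SL(2,ℝ) if and only if there exist integers r, u, s, l and positive divisors δ of q and Δ of σ/v such that g or −g equals the matrix with rows (√δ·rΔ, √δ·u/(vδΔ)) and (√δ·sN/(vδΔ), √δ·lΔ). -/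
open Matrix CongruenceSubgroup

/-- The reduction-of-scalars map `SL(2, ℤ) →* SL(2, ℝ)`. -/
def SL2ZtoSL2R : Matrix.SpecialLinearGroup (Fin 2) ℤ →* Matrix.SpecialLinearGroup (Fin 2) ℝ :=
  Matrix.SpecialLinearGroup.map (Int.castRingHom ℝ)

/-- The subgroup `±Γ₀(N)` of `SL(2, ℝ)`, generated by the image of `Γ₀(N)` and `-1`. -/
def PMGamma0 (N : ℕ) : Subgroup (Matrix.SpecialLinearGroup (Fin 2) ℝ) :=
  (Gamma0 N).map SL2ZtoSL2R ⊔ Subgroup.zpowers (-1)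

/-!
Conjugation by `g = !![α, β; γ, δ]` is additive, and the additive group generated by `±Γ₀(N)` is
generated by `1`, `!![0, 1; 0, 0]`, `!![0, 0; N, 0]` and `!![ε, 0; 0, 0]`. Hence `g` conjugates
`±Γ₀(N)` into itself iff certain products of two entries of `g` are integers. Among these,
`A = α²`, `B = Nβ²`, `C = γ²/N` and `D = δ²` satisfy `AD = (n + 1)²` and `BC = n²` with `n = βγ`, so
`AD` and `BC` are coprime, while `AC` and `BD` lie in `q` times the squares. This splits `q = kk'`
so that `A`, `D` are `k` times squares and `B`, `C` are `k'` times squares, whence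
`g = √k · !![a, b/(σk); cσk', d]` with integers `a, b, c, d`. The remaining conditions say that
`σ/v` divides `ab` and `cd`; as `a, c` and `b, d` are coprime pairs, `σ/v` splits into a common
divisor `Δ` of `a, d` and a common divisor of `b, c`.
-/

open scoped MatrixGroups

section Arithmetic

theorem closure_int_eq_zmultiples {S : Set ℤ} {n : ℕ} (hn : ∀ s ∈ S, (n : ℤ) ∣ s)
    (hgcd : ∀ e : ℕ, (∀ s ∈ S, (e : ℤ) ∣ s) → e ∣ n) :
    AddSubgroup.closure S = AddSubgroup.zmultiples (n : ℤ) := by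
  obtain ⟨m, hm⟩ := Int.subgroup_cyclic (AddSubgroup.closure S)
  rw [← AddSubgroup.zmultiples_eq_closure] at hm
  refine le_antisymm ((AddSubgroup.closure_le _).mpr fun s hs ↦
    Int.mem_zmultiples_iff.mpr (hn s hs)) (AddSubgroup.zmultiples_le.mpr ?_)
  have hdvd : m.natAbs ∣ n := hgcd _ fun s hs ↦ by
    rw [Int.natAbs_dvd, ← Int.mem_zmultiples_iff, ← hm]
    exact AddSubgroup.subset_closure hs
  rw [hm, Int.mem_zmultiples_iff]
  exact Int.natAbs_dvd.mp (Int.natCast_dvd_natCast.mpr hdvd)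

theorem exists_eq_mul_sq_of_sq_eq {R : Type*} [CommRing R] [IsDomain R]
    [UniqueFactorizationMonoid R] {σ q m x : R} (hσ : σ ≠ 0) (hq : Squarefree q)
    (h : x ^ 2 = σ ^ 2 * q * m) : ∃ y, m = q * y ^ 2 := by
  obtain ⟨z, rfl⟩ : σ ∣ x :=
    (UniqueFactorizationMonoid.pow_dvd_pow_iff_dvd two_ne_zero).mp ⟨q * m, by rw [h, mul_assoc]⟩
  have hz : z ^ 2 = q * m :=
    mul_left_cancel₀ (pow_ne_zero 2 hσ) (by linear_combination h)
  obtain ⟨y, rfl⟩ : q ∣ z := (hq.dvd_pow_iff_dvd two_ne_zero).mp ⟨m, hz⟩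
  exact ⟨y, mul_left_cancel₀ hq.ne_zero (by linear_combination -hz)⟩

theorem exists_eq_sq_of_mul_eq_sq {a b c : ℤ} (hab : IsCoprime a b) (ha : 0 ≤ a)
    (h : a * b = c ^ 2) : ∃ d, a = d ^ 2 := by
  obtain ⟨d, rfl | hd⟩ := Int.sq_of_isCoprime hab h
  · exact ⟨d, rfl⟩
  · exact ⟨0, by linarith [sq_nonneg d]⟩

theorem exists_common_factorization {M : Type*} [CommMonoid M] [DecompositionMonoid M]
    {n a b c d : M} (hac : IsRelPrime a c) (hbd : IsRelPrime b d) (hab : n ∣ a * b)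
    (hcd : n ∣ c * d) : ∃ x y, n = x * y ∧ x ∣ a ∧ x ∣ d ∧ y ∣ b ∧ y ∣ c := by
  obtain ⟨x, y, hxa, hyb, rfl⟩ := exists_dvd_and_dvd_of_dvd_mul hab
  exact ⟨x, y, rfl, hxa,
    (hac.of_dvd_left hxa).dvd_of_dvd_mul_left (dvd_of_mul_right_dvd hcd), hyb,
    (hbd.of_dvd_left hyb).dvd_of_dvd_mul_right (dvd_of_mul_left_dvd hcd)⟩

theorem exists_nat_common_factorization {n : ℕ} {a b c d : ℤ} (hac : IsCoprime a c)
    (hbd : IsCoprime b d) (hab : (n : ℤ) ∣ a * b) (hcd : (n : ℤ) ∣ c * d) :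
    ∃ x y : ℕ, n = x * y ∧ (x : ℤ) ∣ a ∧ (x : ℤ) ∣ d ∧ (y : ℤ) ∣ b ∧ (y : ℤ) ∣ c := by
  obtain ⟨x, y, hxy, hx⟩ := exists_common_factorization hac.isRelPrime hbd.isRelPrime hab hcd
  refine ⟨x.natAbs, y.natAbs, ?_, by simpa only [Int.natAbs_dvd]⟩
  rw [← Int.natAbs_mul, ← hxy, Int.natAbs_natCast]

theorem exists_split_squarefree_part {q : ℕ} (hq : q ≠ 0) {A B C D x y : ℤ} (hA : 0 ≤ A)
    (hB : 0 ≤ B) (hC : 0 ≤ C) (hD : 0 ≤ D) (hcop : IsCoprime (A * D) (B * C))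
    (hAC : A * C = q * x ^ 2) (hBD : B * D = q * y ^ 2) :
    ∃ k k' : ℕ, q = k * k' ∧
      ∃ a b c d : ℤ, A = k * a ^ 2 ∧ B = k' * b ^ 2 ∧ C = k' * c ^ 2 ∧ D = k * d ^ 2 := by
  obtain ⟨hAcop, hDcop⟩ := IsCoprime.mul_left_iff.mp hcop
  obtain ⟨hAB, hACcop⟩ := IsCoprime.mul_right_iff.mp hAcop
  obtain ⟨hDB, hDC⟩ := IsCoprime.mul_right_iff.mp hDcop
  obtain ⟨k, k', rfl, ⟨A, rfl⟩, ⟨D, rfl⟩, ⟨C, rfl⟩, ⟨B, rfl⟩⟩ :=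
    exists_nat_common_factorization hAB hDC.symm ⟨_, hAC⟩ ⟨_, hBD⟩
  obtain ⟨hk, hk'⟩ : 0 < k ∧ 0 < k' := by simpa [Nat.pos_iff_ne_zero] using hq
  have hkk' : (k * k' : ℤ) ≠ 0 := by positivity
  have hAC' : A * C = x ^ 2 := mul_left_cancel₀ hkk' (by push_cast at hAC; linear_combination hAC)
  have hBD' : B * D = y ^ 2 := mul_left_cancel₀ hkk' (by push_cast at hBD; linear_combination hBD)
  have hcopAC : IsCoprime A C := hACcop.of_mul_left_right.of_mul_right_right
  have hcopDB : IsCoprime D B := hDB.of_mul_left_right.of_mul_right_right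
  have nonneg {k : ℕ} {z : ℤ} (hk : 0 < k) (h : 0 ≤ k * z) : 0 ≤ z :=
    nonneg_of_mul_nonneg_right h (by positivity)
  obtain ⟨a, rfl⟩ := exists_eq_sq_of_mul_eq_sq hcopAC (nonneg hk hA) hAC'
  obtain ⟨b, rfl⟩ := exists_eq_sq_of_mul_eq_sq hcopDB.symm (nonneg hk' hB) hBD'
  obtain ⟨c, rfl⟩ := exists_eq_sq_of_mul_eq_sq hcopAC.symm (nonneg hk' hC) (mul_comm _ C ▸ hAC')
  obtain ⟨d, rfl⟩ := exists_eq_sq_of_mul_eq_sq hcopDB (nonneg hk hD) (mul_comm _ D ▸ hBD')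
  exact ⟨k, k', rfl, a, b, c, d, rfl, rfl, rfl, rfl⟩

theorem exists_eq_sqrt_mul_intCast {x : ℝ} {k : ℕ} {m : ℤ} (h : x ^ 2 = k * m ^ 2) :
    ∃ n : ℤ, x = √k * n := by
  have hsq : x ^ 2 = (√k * m) ^ 2 := by rw [h, mul_pow, Real.sq_sqrt k.cast_nonneg]
  obtain hx | hx := sq_eq_sq_iff_eq_or_eq_neg.mp hsq
  · exact ⟨m, hx⟩
  · exact ⟨-m, by rw [hx]; push_cast; ring⟩

theorem exists_div_eq_intCast_iff {K : Type*} [DivisionRing K] [CharZero K] {m k : ℤ}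
    (hk : k ≠ 0) : (∃ n : ℤ, (m / k : K) = n) ↔ k ∣ m := by
  refine exists_congr fun n ↦ ?_
  rw [div_eq_iff (Int.cast_ne_zero.mpr hk), mul_comm k]
  norm_cast

theorem natCast_div_gcd_dvd_iff {σ ε : ℕ} {m : ℤ} (hσ : σ ≠ 0) :
    ((σ / σ.gcd ε : ℕ) : ℤ) ∣ m ↔ (σ : ℤ) ∣ ε * m := by
  rw [Int.natCast_dvd, Int.natCast_dvd, Int.natAbs_mul, Int.natAbs_natCast,
    Nat.div_dvd_iff_dvd_mul (σ.gcd_dvd_left ε) (Nat.gcd_pos_of_pos_left ε (Nat.pos_of_ne_zero hσ))]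
  exact dvd_gcd_mul_iff_dvd_mul

end Arithmetic

section Lattice

/-- The additive group generated by the differences `a - d` of diagonal entries of matrices in
`Γ₀(N)`; the integer `ε` of Newman's theorem is its nonnegative generator. -/
def diagDiff (N : ℕ) : AddSubgroup ℤ :=
  AddSubgroup.closure
    ((fun γ : SL(2, ℤ) ↦ γ 0 0 - γ 1 1) '' (Gamma0 N : Set _))

/-- The additive group of integral matrices whose lower-left entry is divisible by `N`, viewed
inside the real matrices; `±Γ₀(N)` consists of its elements of determinant one. -/
def eichlerLattice (N : ℕ) : AddSubgroup (Matrix (Fin 2) (Fin 2) ℝ) where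
  carrier := {M | ∃ a b c d : ℤ, M = !![(a : ℝ), b; N * c, d]}
  zero_mem' := ⟨0, 0, 0, 0, by ext i j; fin_cases i <;> fin_cases j <;> simp⟩
  add_mem' := by
    rintro _ _ ⟨a, b, c, d, rfl⟩ ⟨a', b', c', d', rfl⟩
    exact ⟨a + a', b + b', c + c', d + d', by simp [mul_add]⟩
  neg_mem' := by
    rintro _ ⟨a, b, c, d, rfl⟩
    exact ⟨-a, -b, -c, -d, by simp⟩

theorem of_mem_eichlerLattice {N : ℕ} {x y z w : ℝ} :
    !![x, y; z, w] ∈ eichlerLattice N ↔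
      (∃ a : ℤ, x = a) ∧ (∃ b : ℤ, y = b) ∧ (∃ c : ℤ, z = N * c) ∧ ∃ d : ℤ, w = d := by
  constructor
  · rintro ⟨a, b, c, d, h⟩
    exact ⟨⟨a, congr($h 0 0)⟩, ⟨b, congr($h 0 1)⟩, ⟨c, congr($h 1 0)⟩, ⟨d, congr($h 1 1)⟩⟩
  · rintro ⟨⟨a, rfl⟩, ⟨b, rfl⟩, ⟨c, rfl⟩, ⟨d, rfl⟩⟩
    exact ⟨a, b, c, d, rfl⟩

theorem PMGamma0_eq_map (N : ℕ) : PMGamma0 N = (Gamma0 N).map SL2ZtoSL2R := by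
  refine sup_eq_left.mpr ((Subgroup.zpowers_le).mpr ⟨-1, by simp [Gamma0_mem], ?_⟩)
  ext i j
  fin_cases i <;> fin_cases j <;> simp [SL2ZtoSL2R]

theorem coe_SL2ZtoSL2R (γ : SL(2, ℤ)) :
    (SL2ZtoSL2R γ : Matrix (Fin 2) (Fin 2) ℝ) = !![(γ 0 0 : ℝ), γ 0 1; γ 1 0, γ 1 1] :=
  eta_fin_two _

theorem exists_coe_SL2ZtoSL2R_eq {N : ℕ} {γ : SL(2, ℤ)} (hγ : γ ∈ Gamma0 N) :
    ∃ c : ℤ, (SL2ZtoSL2R γ).val = !![(γ 0 0 : ℝ), γ 0 1; N * c, γ 1 1] := by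
  obtain ⟨c, hc⟩ := (ZMod.intCast_zmod_eq_zero_iff_dvd _ N).mp (Gamma0_mem.mp hγ)
  refine ⟨c, ?_⟩
  rw [coe_SL2ZtoSL2R, hc]
  push_cast
  rfl

theorem mem_PMGamma0_iff_coe_mem_eichlerLattice {N : ℕ} {h : SL(2, ℝ)} :
    h ∈ PMGamma0 N ↔ (h : Matrix (Fin 2) (Fin 2) ℝ) ∈ eichlerLattice N := by
  rw [PMGamma0_eq_map]
  constructor
  · rintro ⟨γ, hγ, rfl⟩
    obtain ⟨c, hc⟩ := exists_coe_SL2ZtoSL2R_eq hγ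
    exact ⟨_, _, c, _, hc⟩
  · rintro ⟨a, b, c, d, hh⟩
    have hdet : a * d - b * (N * c) = 1 := by
      have := h.det_coe
      rw [hh, det_fin_two_of] at this
      exact_mod_cast this
    let γ : SL(2, ℤ) := ⟨!![a, b; N * c, d], by rwa [det_fin_two_of]⟩
    refine ⟨γ, Gamma0_mem.mpr (by simp [γ]), Subtype.ext ?_⟩
    rw [coe_SL2ZtoSL2R, hh]
    simp [γ]

theorem dvd_of_diagDiff_eq_zmultiples {N ε : ℕ}
    (hε : diagDiff N = AddSubgroup.zmultiples (ε : ℤ)) : ε ∣ N := by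
  rw [← Int.natCast_dvd_natCast, ← Int.mem_zmultiples_iff, ← hε]
  refine AddSubgroup.subset_closure ⟨⟨!![1 + N, 1; N, 1], by rw [det_fin_two_of]; ring⟩, ?_, ?_⟩
  · exact Gamma0_mem.mpr (by simp)
  · simp

theorem diagDiff_le_iff {N : ℕ} {S : AddSubgroup ℤ} :
    diagDiff N ≤ S ↔ ∀ γ ∈ Gamma0 N, γ 0 0 - γ 1 1 ∈ S := by
  rw [diagDiff, AddSubgroup.closure_le, Set.image_subset_iff]
  rfl

theorem of_eq_diag_sub_smul_add {N : ℕ} (a b c d : ℤ) :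
    !![(a : ℝ), b; N * c, d] = (a - d) • !![(1 : ℝ), 0; 0, 0] +
      (d • 1 + b • !![0, 1; 0, 0] + c • !![0, 0; (N : ℝ), 0]) := by
  rw [one_fin_two]
  ext i j
  fin_cases i <;> fin_cases j <;> simp [mul_comm]

theorem coe_mem_iff_diag_sub_smul_mem {N : ℕ} {S : AddSubgroup (Matrix (Fin 2) (Fin 2) ℝ)}
    (hone : 1 ∈ S) (hupper : !![0, 1; 0, 0] ∈ S) (hlower : !![0, 0; (N : ℝ), 0] ∈ S)
    {γ : SL(2, ℤ)} (hγ : γ ∈ Gamma0 N) :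
    (SL2ZtoSL2R γ).val ∈ S ↔ (γ 0 0 - γ 1 1) • !![(1 : ℝ), 0; 0, 0] ∈ S := by
  obtain ⟨c, hc⟩ := exists_coe_SL2ZtoSL2R_eq hγ
  rw [hc, of_eq_diag_sub_smul_add, add_mem_cancel_right]
  exact add_mem (add_mem (zsmul_mem hone _) (zsmul_mem hupper _)) (zsmul_mem hlower _)

theorem diagDiff_le_comap_iff {N : ℕ} {S : AddSubgroup (Matrix (Fin 2) (Fin 2) ℝ)}
    (hone : 1 ∈ S) (hupper : !![0, 1; 0, 0] ∈ S) (hlower : !![0, 0; (N : ℝ), 0] ∈ S) :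
    diagDiff N ≤ S.comap (zmultiplesHom _ !![(1 : ℝ), 0; 0, 0]) ↔
      ∀ h ∈ PMGamma0 N, h.val ∈ S := by
  rw [diagDiff_le_iff, PMGamma0_eq_map]
  simp only [Subgroup.mem_map, forall_exists_index, and_imp, forall_apply_eq_imp_iff₂]
  exact forall₂_congr fun γ hγ ↦ (coe_mem_iff_diag_sub_smul_mem hone hupper hlower hγ).symm

theorem forall_coe_mem_PMGamma0_iff {N ε : ℕ} (hε : diagDiff N = AddSubgroup.zmultiples (ε : ℤ))
    {S : AddSubgroup (Matrix (Fin 2) (Fin 2) ℝ)} :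
    (∀ h ∈ PMGamma0 N, h.val ∈ S) ↔ 1 ∈ S ∧ !![0, 1; 0, 0] ∈ S ∧ !![0, 0; (N : ℝ), 0] ∈ S ∧
      !![(ε : ℝ), 0; 0, 0] ∈ S := by
  have hdiag : diagDiff N ≤ S.comap (zmultiplesHom _ !![(1 : ℝ), 0; 0, 0]) ↔
      !![(ε : ℝ), 0; 0, 0] ∈ S := by
    rw [hε, AddSubgroup.zmultiples_le, AddSubgroup.mem_comap, zmultiplesHom_apply]
    simp
  constructor
  · intro h
    have hone : 1 ∈ S := h 1 (one_mem _)
    have hupper : !![0, 1; 0, 0] ∈ S := by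
      rw [show !![(0 : ℝ), 1; 0, 0] = !![1, 1; 0, 1] - 1 by simp [one_fin_two]]
      exact sub_mem (h ⟨!![1, 1; 0, 1], by simp⟩
        (mem_PMGamma0_iff_coe_mem_eichlerLattice.mpr ⟨1, 1, 0, 1, by simp⟩)) hone
    have hlower : !![0, 0; (N : ℝ), 0] ∈ S := by
      rw [show !![0, 0; (N : ℝ), 0] = !![1, 0; (N : ℝ), 1] - 1 by simp [one_fin_two]]
      exact sub_mem (h ⟨!![1, 0; (N : ℝ), 1], by simp⟩
        (mem_PMGamma0_iff_coe_mem_eichlerLattice.mpr ⟨1, 0, 1, 1, by simp⟩)) hone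
    exact ⟨hone, hupper, hlower, hdiag.mp ((diagDiff_le_comap_iff hone hupper hlower).mpr h)⟩
  · rintro ⟨hone, hupper, hlower, h⟩
    exact (diagDiff_le_comap_iff hone hupper hlower).mp (hdiag.mpr h)

end Lattice

section Conjugation

variable {N ε : ℕ} {g : SL(2, ℝ)}

/-- Integrality of the products of entries of `g` which occur when the generators
`!![0, 1; 0, 0]`, `!![0, 0; N, 0]` and `!![ε, 0; 0, 0]` of the additive span of `±Γ₀(N)` are
conjugated by `g`. -/
structure ConjIntegral (N ε : ℕ) (g : SL(2, ℝ)) : Prop where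
  sq_upperLeft : ∃ n : ℤ, g 0 0 ^ 2 = n
  sq_upperRight : ∃ n : ℤ, N * g 0 1 ^ 2 = n
  sq_lowerLeft : ∃ n : ℤ, g 1 0 ^ 2 = N * n
  sq_lowerRight : ∃ n : ℤ, g 1 1 ^ 2 = n
  leftCol : ∃ n : ℤ, g 0 0 * g 1 0 = n
  rightCol : ∃ n : ℤ, N * (g 0 1 * g 1 1) = n
  upperRow : ∃ n : ℤ, ε * (g 0 0 * g 0 1) = n
  lowerRow : ∃ n : ℤ, ε * (g 1 0 * g 1 1) = N * n
  antidiag : ∃ n : ℤ, ε * (g 0 1 * g 1 0) = n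

theorem coe_mul_of_mul_coe_inv {R : Type*} [CommRing R] (g : SL(2, R)) (x y z w : R) :
    (g : Matrix (Fin 2) (Fin 2) R) * !![x, y; z, w] * (g⁻¹ : SL(2, R)) =
      !![x * (g 0 0 * g 1 1) - y * (g 0 0 * g 1 0) + z * (g 0 1 * g 1 1) - w * (g 0 1 * g 1 0),
        -x * (g 0 0 * g 0 1) + y * g 0 0 ^ 2 - z * g 0 1 ^ 2 + w * (g 0 0 * g 0 1);
        x * (g 1 0 * g 1 1) - y * g 1 0 ^ 2 + z * g 1 1 ^ 2 - w * (g 1 0 * g 1 1),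
        -x * (g 0 1 * g 1 0) + y * (g 0 0 * g 1 0) - z * (g 0 1 * g 1 1) +
          w * (g 0 0 * g 1 1)] := by
  rw [Matrix.SpecialLinearGroup.coe_inv, adjugate_fin_two]
  ext i j
  fin_cases i <;> fin_cases j <;> simp [Matrix.mul_apply, Fin.sum_univ_two] <;> ring

theorem mul_sub_mul_eq_one {R : Type*} [CommRing R] (g : SL(2, R)) :
    g 0 0 * g 1 1 - g 0 1 * g 1 0 = 1 := by
  rw [← det_fin_two, g.det_coe]

theorem forall_conj_mem_PMGamma0_iff (hN : N ≠ 0)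
    (hε : diagDiff N = AddSubgroup.zmultiples (ε : ℤ)) :
    (∀ h ∈ PMGamma0 N, g * h * g⁻¹ ∈ PMGamma0 N) ↔ ConjIntegral N ε g := by
  have hone : (g : Matrix (Fin 2) (Fin 2) ℝ) * 1 * (g⁻¹ : SL(2, ℝ)) ∈ eichlerLattice N := by
    rw [mul_one, ← Matrix.SpecialLinearGroup.coe_mul, mul_inv_cancel]
    exact mem_PMGamma0_iff_coe_mem_eichlerLattice.mp (one_mem _)
  let conj : Matrix (Fin 2) (Fin 2) ℝ →+ Matrix (Fin 2) (Fin 2) ℝ :=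
    (AddMonoidHom.mulRight ↑g⁻¹).comp (AddMonoidHom.mulLeft (g : Matrix (Fin 2) (Fin 2) ℝ))
  have hconj (M : Matrix (Fin 2) (Fin 2) ℝ) :
      M ∈ (eichlerLattice N).comap conj ↔ g * M * (g⁻¹ : SL(2, ℝ)) ∈ eichlerLattice N := Iff.rfl
  have hNR : (N : ℝ) ≠ 0 := Nat.cast_ne_zero.mpr hN
  have hdet := mul_sub_mul_eq_one g
  have hspan := forall_coe_mem_PMGamma0_iff hε (S := (eichlerLattice N).comap conj)
  simp only [hconj, hone, coe_mul_of_mul_coe_inv, of_mem_eichlerLattice, zero_mul, one_mul,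
    add_zero, zero_add, sub_zero, zero_sub, neg_zero, true_and, neg_mul] at hspan
  simp only [mem_PMGamma0_iff_coe_mem_eichlerLattice, Matrix.SpecialLinearGroup.coe_mul] at hspan ⊢
  rw [hspan]
  constructor
  · rintro ⟨⟨-, hα, ⟨c, hc⟩, hαγ⟩, ⟨hβδ, ⟨b, hb⟩, ⟨d, hd⟩, -⟩, -, ⟨y, hy⟩, hz, ⟨w, hw⟩⟩
    exact ⟨hα, ⟨-b, by push_cast; linarith⟩, ⟨-c, by push_cast; linarith⟩,
      ⟨d, mul_left_cancel₀ hNR hd⟩, hαγ, hβδ, ⟨-y, by push_cast; linarith⟩, hz,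
      ⟨-w, by push_cast; linarith⟩⟩
  · rintro ⟨hα, ⟨b, hb⟩, ⟨c, hc⟩, ⟨d, hd⟩, ⟨x, hx⟩, ⟨w, hw⟩, ⟨y, hy⟩, hz, ⟨t, ht⟩⟩
    exact ⟨⟨⟨-x, by push_cast; linarith⟩, hα, ⟨-c, by push_cast; linarith⟩, x, hx⟩,
      ⟨⟨w, hw⟩, ⟨-b, by push_cast; linarith⟩, ⟨d, by rw [hd]⟩, -w, by push_cast; linarith⟩,
      ⟨ε + t, by push_cast; linear_combination (ε : ℝ) * hdet + ht⟩,
      ⟨-y, by push_cast; linarith⟩, hz, -t, by push_cast; linarith⟩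

-- `(ε g₀₁ g₁₀)² = ε² · (N g₀₁²) · (g₁₀² / N)`, where the last two factors are integers.
theorem ConjIntegral.exists_antidiag (h : ConjIntegral N ε g) (hε : ε ≠ 0) :
    ∃ n : ℤ, g 0 1 * g 1 0 = n := by
  obtain ⟨b, hb⟩ := h.sq_upperRight
  obtain ⟨c, hc⟩ := h.sq_lowerLeft
  obtain ⟨w, hw⟩ := h.antidiag
  have hsq : w ^ 2 = ε ^ 2 * (b * c) := by
    have : (w : ℝ) ^ 2 = ε ^ 2 * (b * c) := by
      rw [← hw, ← hb]
      linear_combination (ε * g 0 1 : ℝ) ^ 2 * hc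
    exact_mod_cast this
  obtain ⟨n, rfl⟩ : (ε : ℤ) ∣ w := (Int.pow_dvd_pow_iff two_ne_zero).mp ⟨b * c, hsq⟩
  have hεR : (ε : ℝ) ≠ 0 := Nat.cast_ne_zero.mpr hε
  exact ⟨n, mul_left_cancel₀ hεR (by rw [hw]; push_cast; rfl)⟩

theorem ConjIntegral.exists_isCoprime_sq_entries (h : ConjIntegral N ε g) (hε : ε ≠ 0) :
    ∃ A B C D : ℤ, (g 0 0 ^ 2 = A ∧ N * g 0 1 ^ 2 = B ∧ g 1 0 ^ 2 = N * C ∧ g 1 1 ^ 2 = D) ∧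
      IsCoprime (A * D) (B * C) ∧ (∃ x : ℤ, x ^ 2 = N * (A * C)) ∧
      ∃ y : ℤ, y ^ 2 = N * (B * D) := by
  obtain ⟨n, hn⟩ := h.exists_antidiag hε
  obtain ⟨⟨A, hA⟩, ⟨B, hB⟩, ⟨C, hC⟩, ⟨D, hD⟩, ⟨x, hx⟩, ⟨y, hy⟩, -, -, -⟩ := h
  have hdet := mul_sub_mul_eq_one g
  have hAD : A * D = (n + 1) ^ 2 := by
    rify
    rw [← hA, ← hD, ← hn]
    linear_combination (g 0 0 * g 1 1 + g 0 1 * g 1 0 + 1) * hdet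
  have hBC : B * C = n ^ 2 := by
    rify
    rw [← hB, ← hn]
    linear_combination -(g 0 1) ^ 2 * hC
  have hAC : x ^ 2 = N * (A * C) := by
    rify
    rw [← hx, ← hA]
    linear_combination (g 0 0) ^ 2 * hC
  have hBD : y ^ 2 = N * (B * D) := by
    rify
    rw [← hy, ← hB, ← hD]
    ring
  have hcop : IsCoprime (A * D) (B * C) := by
    rw [hAD, hBC]
    exact IsCoprime.pow ⟨1, -1, by ring⟩
  exact ⟨A, B, C, D, ⟨hA, hB, hC, hD⟩, hcop, ⟨x, hAC⟩, ⟨y, hBD⟩⟩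

theorem ConjIntegral.exists_sq_entries {σ q : ℕ} (h : ConjIntegral N ε g) (hσ : σ ≠ 0)
    (hq : Squarefree q) (hN : N = σ ^ 2 * q) (hε : ε ≠ 0) :
    ∃ k k' : ℕ, q = k * k' ∧ ∃ a b c d : ℤ, g 0 0 ^ 2 = k * a ^ 2 ∧ N * g 0 1 ^ 2 = k' * b ^ 2 ∧
      g 1 0 ^ 2 = N * (k' * c ^ 2) ∧ g 1 1 ^ 2 = k * d ^ 2 := by
  have hN0 : N ≠ 0 := hN ▸ mul_ne_zero (pow_ne_zero 2 hσ) hq.ne_zero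
  obtain ⟨A, B, C, D, ⟨hA, hB, hC, hD⟩, hcop, ⟨x, hx⟩, ⟨y, hy⟩⟩ :=
    h.exists_isCoprime_sq_entries hε
  have hA0 : 0 ≤ A := by rify; rw [← hA]; positivity
  have hB0 : 0 ≤ B := by rify; rw [← hB]; positivity
  have hC0 : 0 ≤ C := by
    rify
    exact nonneg_of_mul_nonneg_right (hC ▸ sq_nonneg (g 1 0)) (by positivity)
  have hD0 : 0 ≤ D := by rify; rw [← hD]; positivity
  have hNZ : (N : ℤ) = σ ^ 2 * q := by exact_mod_cast hN
  have hσZ : (σ : ℤ) ≠ 0 := Int.natCast_ne_zero.mpr hσ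
  have hqZ : Squarefree (q : ℤ) := Int.squarefree_natCast.mpr hq
  obtain ⟨x, hAC⟩ := exists_eq_mul_sq_of_sq_eq hσZ hqZ (hNZ ▸ hx)
  obtain ⟨y, hBD⟩ := exists_eq_mul_sq_of_sq_eq hσZ hqZ (hNZ ▸ hy)
  obtain ⟨k, k', hkk', a, b, c, d, rfl, rfl, rfl, rfl⟩ :=
    exists_split_squarefree_part hq.ne_zero hA0 hB0 hC0 hD0 hcop hAC hBD
  push_cast at hA hB hC hD
  exact ⟨k, k', hkk', a, b, c, d, hA, hB, hC, hD⟩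

/-- The real matrix `√k · !![a, b / (σk); cσk', d]`. Conjugation by `!![σ, 0; 0, 1]` turns it into
`√k · !![a, b / k; ck', d]`, which has the shape of an Atkin–Lehner involution. -/
noncomputable def scaledAtkinLehner (σ k k' : ℕ) (a b c d : ℤ) : Matrix (Fin 2) (Fin 2) ℝ :=
  !![√k * a, √k * b / (σ * k); √k * c * (σ * k'), √k * d]

theorem ConjIntegral.exists_eq_scaledAtkinLehner {σ q : ℕ} (h : ConjIntegral N ε g) (hσ : σ ≠ 0)
    (hq : Squarefree q) (hN : N = σ ^ 2 * q) (hε : ε ≠ 0) :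
    ∃ k k' : ℕ, q = k * k' ∧ ∃ a b c d : ℤ, g.val = scaledAtkinLehner σ k k' a b c d := by
  obtain ⟨k, k', rfl, a, b, c, d, ha, hb, hc, hd⟩ := h.exists_sq_entries hσ hq hN hε
  obtain ⟨hk, hk'⟩ : (k : ℝ) ≠ 0 ∧ (k' : ℝ) ≠ 0 := by simpa using hq.ne_zero
  have hσR : (σ : ℝ) ≠ 0 := Nat.cast_ne_zero.mpr hσ
  have hNR : (N : ℝ) = σ ^ 2 * (k * k') := by exact_mod_cast hN
  have hb' : (g 0 1 * (σ * k)) ^ 2 = k * b ^ 2 :=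
    mul_left_cancel₀ hk' (by linear_combination k * hb - k * (g 0 1) ^ 2 * hNR)
  have hc' : (g 1 0 / (σ * k')) ^ 2 = k * c ^ 2 := by
    rw [div_pow, hc, hNR]
    field_simp
  obtain ⟨a, ha⟩ := exists_eq_sqrt_mul_intCast ha
  obtain ⟨b, hb⟩ := exists_eq_sqrt_mul_intCast hb'
  obtain ⟨c, hc⟩ := exists_eq_sqrt_mul_intCast hc'
  obtain ⟨d, hd⟩ := exists_eq_sqrt_mul_intCast hd
  refine ⟨k, k', rfl, a, b, c, d, ?_⟩
  rw [eta_fin_two g.val, ha, eq_div_of_mul_eq (by positivity) hb,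
    (div_eq_iff (by positivity)).mp hc, hd, scaledAtkinLehner]

theorem det_scaledAtkinLehner {σ k : ℕ} (hσ : σ ≠ 0) (hk : k ≠ 0) (k' : ℕ) (a b c d : ℤ) :
    (scaledAtkinLehner σ k k' a b c d).det = k * (a * d) - k' * (b * c) := by
  have hσR : (σ : ℝ) ≠ 0 := Nat.cast_ne_zero.mpr hσ
  have hkR : (k : ℝ) ≠ 0 := Nat.cast_ne_zero.mpr hk
  rw [scaledAtkinLehner, det_fin_two_of]
  field_simp
  rw [Real.sq_sqrt k.cast_nonneg]

theorem conjIntegral_iff_of_eq_scaledAtkinLehner {σ k k' : ℕ} {a b c d : ℤ} (hσ : σ ≠ 0)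
    (hk : k ≠ 0) (hk' : k' ≠ 0) (hN : N = σ ^ 2 * (k * k'))
    (hg : g.val = scaledAtkinLehner σ k k' a b c d) :
    ConjIntegral N ε g ↔ (σ : ℤ) ∣ ε * (a * b) ∧ (σ : ℤ) ∣ ε * (c * d) := by
  have hσR : (σ : ℝ) ≠ 0 := Nat.cast_ne_zero.mpr hσ
  have hkR : (k : ℝ) ≠ 0 := Nat.cast_ne_zero.mpr hk
  have hkR' : (k' : ℝ) ≠ 0 := Nat.cast_ne_zero.mpr hk'
  have hsqrt : √(k : ℝ) ^ 2 = k := Real.sq_sqrt k.cast_nonneg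
  have hNR : (N : ℝ) = σ ^ 2 * (k * k') := by exact_mod_cast hN
  have hα : g 0 0 = √k * a := congr($hg 0 0)
  have hβ : g 0 1 = √k * b / (σ * k) := congr($hg 0 1)
  have hγ : g 1 0 = √k * c * (σ * k') := congr($hg 1 0)
  have hδ : g 1 1 = √k * d := congr($hg 1 1)
  have hupper : (∃ n : ℤ, ε * (g 0 0 * g 0 1) = n) ↔ (σ : ℤ) ∣ ε * (a * b) := by
    rw [← exists_div_eq_intCast_iff (K := ℝ) (Int.natCast_ne_zero.mpr hσ), hα, hβ]
    push_cast
    field_simp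
    rw [hsqrt]
    field_simp
  have hlower : (∃ n : ℤ, ε * (g 1 0 * g 1 1) = N * n) ↔ (σ : ℤ) ∣ ε * (c * d) := by
    rw [← exists_div_eq_intCast_iff (K := ℝ) (Int.natCast_ne_zero.mpr hσ), hγ, hδ, hNR]
    push_cast
    field_simp
    rw [hsqrt]
    field_simp
  refine ⟨fun h ↦ ⟨hupper.mp h.upperRow, hlower.mp h.lowerRow⟩, fun h ↦
    ⟨⟨k * a ^ 2, ?_⟩, ⟨k' * b ^ 2, ?_⟩, ⟨k' * c ^ 2, ?_⟩, ⟨k * d ^ 2, ?_⟩, ⟨σ * k * k' * a * c, ?_⟩,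
      ⟨σ * k' * k * b * d, ?_⟩, hupper.mpr h.1, hlower.mpr h.2, ⟨ε * k' * b * c, ?_⟩⟩⟩
  all_goals
    simp only [hα, hβ, hγ, hδ, hNR]
    push_cast
    field_simp
    rw [hsqrt]
    try ring

end Conjugation

section NewmanMatrix

/-- The matrix `√δ · !![rΔ, u/(vδΔ); sN/(vδΔ), lΔ]` of Newman's theorem. -/
noncomputable def newmanMatrix (N v : ℕ) (r u s l : ℤ) (δ Δ : ℕ) : Matrix (Fin 2) (Fin 2) ℝ :=
  !![√δ * (r * Δ), √δ * u / (v * δ * Δ); √δ * (s * N) / (v * δ * Δ), √δ * (l * Δ)]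

theorem neg_newmanMatrix (N v : ℕ) (r u s l : ℤ) (δ Δ : ℕ) :
    -newmanMatrix N v r u s l δ Δ = newmanMatrix N v (-r) (-u) (-s) (-l) δ Δ := by
  simp [newmanMatrix, neg_div]

theorem adjugate_newmanMatrix (N v : ℕ) (r u s l : ℤ) (δ Δ : ℕ) :
    (newmanMatrix N v r u s l δ Δ).adjugate = newmanMatrix N v l (-u) (-s) r δ Δ := by
  simp [newmanMatrix, adjugate_fin_two_of, neg_div]

theorem newmanMatrix_eq_scaledAtkinLehner {N v δ δ' Δ Δ' : ℕ} (hv : v ≠ 0) (hδ : δ ≠ 0)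
    (hΔ : Δ ≠ 0) (hΔ' : Δ' ≠ 0) (hN : N = (v * (Δ * Δ')) ^ 2 * (δ * δ')) (r u s l : ℤ) :
    newmanMatrix N v r u s l δ Δ =
      scaledAtkinLehner (v * (Δ * Δ')) δ δ' (Δ * r) (Δ' * u) (Δ' * s) (Δ * l) := by
  have hvR : (v : ℝ) ≠ 0 := Nat.cast_ne_zero.mpr hv
  have hδR : (δ : ℝ) ≠ 0 := Nat.cast_ne_zero.mpr hδ
  have hΔR : (Δ : ℝ) ≠ 0 := Nat.cast_ne_zero.mpr hΔ
  have hΔR' : (Δ' : ℝ) ≠ 0 := Nat.cast_ne_zero.mpr hΔ'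
  rw [newmanMatrix, scaledAtkinLehner, hN]
  push_cast
  ext i j
  fin_cases i <;> fin_cases j <;> simp [field]

variable {N ε σ q v : ℕ} {g : SL(2, ℝ)}

theorem ConjIntegral.exists_eq_newmanMatrix (h : ConjIntegral N ε g) (hσ : σ ≠ 0)
    (hq : Squarefree q) (hN : N = σ ^ 2 * q) (hε : ε ≠ 0) :
    ∃ (r u s l : ℤ) (δ Δ : ℕ), δ ∣ q ∧ Δ ∣ σ / σ.gcd ε ∧
      g.val = newmanMatrix N (σ.gcd ε) r u s l δ Δ := by
  obtain ⟨k, k', rfl, a, b, c, d, hg⟩ := h.exists_eq_scaledAtkinLehner hσ hq hN hε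
  obtain ⟨hk, hk'⟩ := mul_ne_zero_iff.mp hq.ne_zero
  obtain ⟨hab, hcd⟩ := (conjIntegral_iff_of_eq_scaledAtkinLehner hσ hk hk' hN hg).mp h
  have hdet : k * (a * d) - k' * (b * c) = 1 := by
    have := det_scaledAtkinLehner hσ hk k' a b c d
    rw [← hg, g.det_coe] at this
    exact_mod_cast this.symm
  have hac : IsCoprime a c := ⟨k * d, -(b * k'), by linear_combination hdet⟩
  have hbd : IsCoprime b d := ⟨-(k' * c), a * k, by linear_combination hdet⟩
  obtain ⟨Δ, Δ', hΔΔ', ⟨r, rfl⟩, ⟨l, rfl⟩, ⟨u, rfl⟩, ⟨s, rfl⟩⟩ :=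
    exists_nat_common_factorization hac hbd ((natCast_div_gcd_dvd_iff hσ).mpr hab)
      ((natCast_div_gcd_dvd_iff hσ).mpr hcd)
  have hσ_eq : σ = σ.gcd ε * (Δ * Δ') := by rw [← hΔΔ', Nat.mul_div_cancel' (σ.gcd_dvd_left ε)]
  refine ⟨r, u, s, l, k, Δ, dvd_mul_right k k', ⟨Δ', hΔΔ'⟩, ?_⟩
  obtain ⟨hv, hτ⟩ := mul_ne_zero_iff.mp (hσ_eq ▸ hσ)
  obtain ⟨hΔ, hΔ'⟩ := mul_ne_zero_iff.mp hτ
  rw [newmanMatrix_eq_scaledAtkinLehner hv hk hΔ hΔ' (hσ_eq ▸ hN), ← hσ_eq]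
  exact hg

theorem conjIntegral_of_eq_newmanMatrix {δ Δ : ℕ} {r u s l : ℤ} (hσ : σ ≠ 0) (hq : q ≠ 0)
    (hN : N = σ ^ 2 * q) (hvσ : v ∣ σ) (hvε : v ∣ ε) (hδ : δ ∣ q) (hΔ : Δ ∣ σ / v)
    (hg : g.val = newmanMatrix N v r u s l δ Δ) : ConjIntegral N ε g := by
  obtain ⟨δ', rfl⟩ := hδ
  obtain ⟨τ, rfl⟩ := hvσ
  obtain ⟨ε', rfl⟩ := hvε
  obtain ⟨hv, hτ⟩ := mul_ne_zero_iff.mp hσ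
  rw [Nat.mul_div_cancel_left _ (Nat.pos_of_ne_zero hv)] at hΔ
  obtain ⟨Δ', rfl⟩ := hΔ
  obtain ⟨hδ, hδ'⟩ := mul_ne_zero_iff.mp hq
  obtain ⟨hΔ, hΔ'⟩ := mul_ne_zero_iff.mp hτ
  rw [newmanMatrix_eq_scaledAtkinLehner hv hδ hΔ hΔ' hN] at hg
  rw [conjIntegral_iff_of_eq_scaledAtkinLehner hσ hδ hδ' hN hg]
  push_cast
  exact ⟨⟨ε' * (r * u), by ring⟩, ⟨ε' * (s * l), by ring⟩⟩

theorem mem_normalizer_of_eq_newmanMatrix {δ Δ : ℕ} {r u s l : ℤ} (hσ : σ ≠ 0) (hq : q ≠ 0)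
    (hN : N = σ ^ 2 * q) (hε : diagDiff N = AddSubgroup.zmultiples (ε : ℤ)) (hvσ : v ∣ σ)
    (hvε : v ∣ ε) (hδ : δ ∣ q) (hΔ : Δ ∣ σ / v) (hg : g.val = newmanMatrix N v r u s l δ Δ) :
    g ∈ Subgroup.normalizer (PMGamma0 N : Set SL(2, ℝ)) := by
  have hinv : (g⁻¹).val = newmanMatrix N v l (-u) (-s) r δ Δ := by
    rw [Matrix.SpecialLinearGroup.coe_inv, hg, adjugate_newmanMatrix]
  have hN0 : N ≠ 0 := hN ▸ mul_ne_zero (pow_ne_zero 2 hσ) hq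
  have hconj := (forall_conj_mem_PMGamma0_iff hN0 hε).mpr
    (conjIntegral_of_eq_newmanMatrix hσ hq hN hvσ hvε hδ hΔ hg)
  have hconj_inv := (forall_conj_mem_PMGamma0_iff hN0 hε).mpr
    (conjIntegral_of_eq_newmanMatrix hσ hq hN hvσ hvε hδ hΔ hinv)
  exact Subgroup.mem_normalizer_iff.mpr fun x ↦
    ⟨hconj x, fun hx ↦ by simpa [mul_assoc] using hconj_inv _ hx⟩

end NewmanMatrix

/-- **Newman's theorem.** Write `N = σ² q` with `q` squarefree, let `ε` be the gcd of all
`a - d` over matrices in `Γ₀(N)` with diagonal `a, d`, and `v = gcd(σ, ε)`. A matrix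
`g ∈ SL(2, ℝ)` normalizes `±Γ₀(N)` iff `±g` has the form
`√δ · !![rΔ, u/(vδΔ); sN/(vδΔ), lΔ]` with `r, u, s, l ∈ ℤ`, `δ ∣ q` and `Δ ∣ σ/v`. -/
theorem newman_normalizer_Gamma0
    (N : ℕ) (hN : 0 < N) (σ q : ℕ) (hσ : 0 < σ) (hq : 0 < q) (hqsf : Squarefree q)
    (hNσq : N = σ ^ 2 * q)
    (ε : ℕ)
    (hε : ∀ γ : Matrix.SpecialLinearGroup (Fin 2) ℤ, γ ∈ Gamma0 N →
      (ε : ℤ) ∣ ((γ : Matrix (Fin 2) (Fin 2) ℤ) 0 0 - (γ : Matrix (Fin 2) (Fin 2) ℤ) 1 1))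
    (hεgcd : ∀ e : ℕ, (∀ γ : Matrix.SpecialLinearGroup (Fin 2) ℤ, γ ∈ Gamma0 N →
      (e : ℤ) ∣ ((γ : Matrix (Fin 2) (Fin 2) ℤ) 0 0 - (γ : Matrix (Fin 2) (Fin 2) ℤ) 1 1)) →
      e ∣ ε)
    (v : ℕ) (hv : v = Nat.gcd σ ε)
    (g : Matrix.SpecialLinearGroup (Fin 2) ℝ) :
    g ∈ Subgroup.normalizer (PMGamma0 N) ↔
      ∃ (r u s l : ℤ) (δ Δ : ℕ), 0 < δ ∧ δ ∣ q ∧ 0 < Δ ∧ Δ ∣ σ / v ∧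
        ((g : Matrix (Fin 2) (Fin 2) ℝ) =
            !![Real.sqrt δ * ((r : ℝ) * (Δ : ℝ)),
                Real.sqrt δ * (u : ℝ) / ((v : ℝ) * (δ : ℝ) * (Δ : ℝ));
              Real.sqrt δ * ((s : ℝ) * (N : ℝ)) / ((v : ℝ) * (δ : ℝ) * (Δ : ℝ)),
                Real.sqrt δ * ((l : ℝ) * (Δ : ℝ))] ∨
          (g : Matrix (Fin 2) (Fin 2) ℝ) =
            -!![Real.sqrt δ * ((r : ℝ) * (Δ : ℝ)),
                Real.sqrt δ * (u : ℝ) / ((v : ℝ) * (δ : ℝ) * (Δ : ℝ));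
              Real.sqrt δ * ((s : ℝ) * (N : ℝ)) / ((v : ℝ) * (δ : ℝ) * (Δ : ℝ)),
                Real.sqrt δ * ((l : ℝ) * (Δ : ℝ))]) := by
  have hdiag : diagDiff N = AddSubgroup.zmultiples (ε : ℤ) := by
    refine closure_int_eq_zmultiples (Set.forall_mem_image.mpr hε) fun e he ↦ hεgcd e ?_
    exact Set.forall_mem_image.mp he
  have hε0 : ε ≠ 0 := ne_zero_of_dvd_ne_zero hN.ne' (dvd_of_diagDiff_eq_zmultiples hdiag)
  subst hv
  constructor
  · intro h
    have hconj : ConjIntegral N ε g := (forall_conj_mem_PMGamma0_iff hN.ne' hdiag).mp fun x ↦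
      (Subgroup.mem_normalizer_iff.mp h x).mp
    obtain ⟨r, u, s, l, δ, Δ, hδ, hΔ, hg⟩ := hconj.exists_eq_newmanMatrix hσ.ne' hqsf hNσq hε0
    exact ⟨r, u, s, l, δ, Δ, Nat.pos_of_dvd_of_pos hδ hq, hδ,
      Nat.pos_of_dvd_of_pos hΔ (Nat.div_gcd_pos_of_pos_left ε hσ), hΔ, .inl hg⟩
  · rintro ⟨r, u, s, l, δ, Δ, -, hδ, -, hΔ, hg⟩
    have hmem {r u s l : ℤ} (h : g.val = newmanMatrix N (σ.gcd ε) r u s l δ Δ) :=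
      mem_normalizer_of_eq_newmanMatrix hσ.ne' hq.ne' hNσq hdiag (σ.gcd_dvd_left ε)
        (σ.gcd_dvd_right ε) hδ hΔ h
    exact hg.elim hmem fun hg ↦ hmem (hg.trans (neg_newmanMatrix ..))
end

section
/- Let N be a positive integer with N ≠ 4. A matrix g ∈ SL(2,ℝ) normalizes the subgroup ±Γ₁(N) of SL(2,ℝ) if and only if there exist a Hall divisor Q of N (i.e. Q ∣ N with gcd(Q, N/Q) = 1) and integers x, y, z, w with Q·x·w − (N/Q)·y·z = 1 such that g or −g equals (1/√Q)·[[Qx, y],[Nz, Qw]]. -/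
open Matrix CongruenceSubgroup

/-- The subgroup `±Γ₁(N)` of `SL(2, ℝ)`, generated by the image of `Γ₁(N)` and `-1`. -/
def PMGamma1 (N : ℕ) : Subgroup (Matrix.SpecialLinearGroup (Fin 2) ℝ) :=
  (Gamma1 N).map SL2ZtoSL2R ⊔ Subgroup.zpowers (-1)

/-!
`Γ₁(N)` is the set of `h ∈ SL(2, ℝ)` for which `h - 1` lies in the ring `L` of integral matrices
congruent to `!![0, *; 0, 0]` modulo `N`. An Atkin–Lehner matrix `g` satisfies `g L g⁻¹ = L`, hence
normalizes `±Γ₁(N)`.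

Conversely, let `g = !![p, q; r, s]` normalize `±Γ₁(N)`. If `X ∈ L` has trace and determinant zero,
then `g (1 + X) g⁻¹` has trace `2`. An element of `-Γ₁(N)` has trace `-2` modulo `N`, so for it to
have trace `2` one needs `N ∣ 4`; as `N ≠ 4` this leaves `N ∣ 2`, where `2 ∈ L` and `±Γ₁(N)` is
`Γ₁(N)`. Thus `g X g⁻¹ ∈ L`. With `X = !![0, 1; 0, 0]`, `X = !![0, 0; N, 0]` and the product of the
two conjugates, this says that `p²`, `r² / N`, `pr / N`, `s²`, `N q²`, `qs` and `m = ps` are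
integers. Since `m - 1 = qr`, `N` divides `m (m - 1)` and so factors as `N = Q Q'` with `Q ∣ m` and
`Q' ∣ m - 1`. Finally `p²` and `s²` divide `m²`, `r² / N` and `N q²` divide `(m - 1)²`, and these
two squares are coprime, so that `p² (r² / N) = Q Q' (pr / N)²` forces `p² = Q x²` and
`r² / N = Q' z²`; the second column is treated in the same way.
-/

open scoped MatrixGroups

/-- The real matrices `X` with integral entries that are congruent to `!![0, *; 0, 0]` modulo `N`.
They form a non-unital ring, and `Γ₁(N)` consists of the `h ∈ SL(2, ℝ)` with `h - 1` in it. -/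
def gamma1Ring (N : ℕ) : NonUnitalSubring (Matrix (Fin 2) (Fin 2) ℝ) where
  carrier := {X | ∃ a b c d : ℤ, X = !![(N : ℝ) * a, (b : ℝ); N * c, N * d]}
  zero_mem' := ⟨0, 0, 0, 0, by ext i j; fin_cases i <;> fin_cases j <;> simp⟩
  add_mem' := by
    rintro _ _ ⟨a, b, c, d, rfl⟩ ⟨a', b', c', d', rfl⟩
    exact ⟨a + a', b + b', c + c', d + d', by simp [mul_add]⟩
  neg_mem' := by
    rintro _ ⟨a, b, c, d, rfl⟩
    exact ⟨-a, -b, -c, -d, by simp⟩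
  mul_mem' := by
    rintro _ _ ⟨a, b, c, d, rfl⟩ ⟨a', b', c', d', rfl⟩
    refine ⟨N * (a * a') + b * c', N * (a * b' + b * d'), N * (c * a' + d * c'),
      c * b' + N * (d * d'), ?_⟩
    rw [mul_fin_two]
    push_cast
    congr! 3 <;> ring_nf

lemma fin_two_mem_gamma1Ring_iff {N : ℕ} {a b c d : ℝ} :
    !![a, b; c, d] ∈ gamma1Ring N ↔ (∃ n : ℤ, a = N * n) ∧ (∃ n : ℤ, b = n) ∧
      (∃ n : ℤ, c = N * n) ∧ ∃ n : ℤ, d = N * n := by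
  constructor
  · rintro ⟨a', b', c', d', h⟩
    exact ⟨⟨a', congr_fun₂ h 0 0⟩, ⟨b', congr_fun₂ h 0 1⟩,
      ⟨c', congr_fun₂ h 1 0⟩, ⟨d', congr_fun₂ h 1 1⟩⟩
  · rintro ⟨⟨a', rfl⟩, ⟨b', rfl⟩, ⟨c', rfl⟩, ⟨d', rfl⟩⟩
    exact ⟨a', b', c', d', rfl⟩

lemma mem_gamma1Ring_iff {N : ℕ} {X : Matrix (Fin 2) (Fin 2) ℝ} :
    X ∈ gamma1Ring N ↔ ∃ a b c d : ℤ, X = !![(N : ℝ) * a, (b : ℝ); N * c, N * d] :=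
  Iff.rfl

lemma upper_mem_gamma1Ring (N : ℕ) : !![0, 1; 0, 0] ∈ gamma1Ring N :=
  ⟨0, 1, 0, 0, by simp⟩

lemma lower_mem_gamma1Ring (N : ℕ) : !![0, 0; (N : ℝ), 0] ∈ gamma1Ring N :=
  ⟨0, 0, 1, 0, by simp⟩

lemma Gamma1_mem_iff_dvd {N : ℕ} {γ : SL(2, ℤ)} :
    γ ∈ Gamma1 N ↔ (N : ℤ) ∣ γ 0 0 - 1 ∧ (N : ℤ) ∣ γ 1 1 - 1 ∧ (N : ℤ) ∣ γ 1 0 := by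
  simp only [Gamma1_mem, ← ZMod.intCast_zmod_eq_zero_iff_dvd, Int.cast_sub, Int.cast_one,
    sub_eq_zero]

lemma SL2ZtoSL2R_apply (γ : SL(2, ℤ)) (i j : Fin 2) : (SL2ZtoSL2R γ).1 i j = γ i j :=
  rfl

lemma mem_map_Gamma1_iff {N : ℕ} {h : SL(2, ℝ)} :
    h ∈ (Gamma1 N).map SL2ZtoSL2R ↔ h.1 - 1 ∈ gamma1Ring N := by
  simp only [mem_gamma1Ring_iff, sub_eq_iff_eq_add']
  constructor
  · rintro ⟨γ, hγ, rfl⟩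
    obtain ⟨⟨a, ha⟩, ⟨d, hd⟩, ⟨c, hc⟩⟩ := Gamma1_mem_iff_dvd.1 hγ
    refine ⟨a, γ 0 1, c, d, ?_⟩
    rw [sub_eq_iff_eq_add'] at ha hd
    ext i j
    fin_cases i <;> fin_cases j <;> simp [SL2ZtoSL2R, ha, hc, hd]
  · rintro ⟨a, b, c, d, h_eq⟩
    have hdet : (1 + N * a) * (1 + N * d) - b * (N * c) = (1 : ℤ) := by
      have := h.det_coe
      simp only [h_eq, one_fin_two, of_add_of, add_cons, head_cons, tail_cons, empty_add_empty,
        det_fin_two_of, zero_add] at this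
      exact_mod_cast this
    let γ : SL(2, ℤ) := ⟨!![1 + N * a, b; N * c, 1 + N * d], by rw [det_fin_two_of, hdet]⟩
    refine ⟨γ, Gamma1_mem_iff_dvd.2 (by simp [γ]), ?_⟩
    ext i j
    rw [SL2ZtoSL2R_apply, h_eq]
    fin_cases i <;> fin_cases j <;> simp [γ]

lemma mem_sup_zpowers_neg_one_iff {G : Type*} [Group G] [HasDistribNeg G] {H : Subgroup G}
    {h : G} : h ∈ H ⊔ Subgroup.zpowers (-1) ↔ h ∈ H ∨ -h ∈ H := by
  constructor
  · intro hh
    have : (Subgroup.zpowers (-1 : G)).Normal := by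
      constructor
      rintro _ ⟨n, rfl⟩ g
      exact ⟨n, by simp [((Commute.neg_one_right g).zpow_right n).eq]⟩
    obtain ⟨u, hu, _, ⟨n, rfl⟩, rfl⟩ := Subgroup.mem_sup_of_normal_right.1 hh
    rcases Int.even_or_odd n with hn | hn
    · exact Or.inl (by simpa [hn.neg_one_zpow] using hu)
    · exact Or.inr (by simpa [hn.neg_one_zpow] using hu)
  · rintro (hh | hh)
    · exact Subgroup.mem_sup_left hh
    · simpa using mul_mem (Subgroup.mem_sup_right (Subgroup.mem_zpowers (-1 : G)))
        (Subgroup.mem_sup_left hh)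

lemma mem_PMGamma1_iff {N : ℕ} {h : SL(2, ℝ)} :
    h ∈ PMGamma1 N ↔
      h.1 - 1 ∈ gamma1Ring N ∨ -h.1 - 1 ∈ gamma1Ring N := by
  rw [PMGamma1, mem_sup_zpowers_neg_one_iff, mem_map_Gamma1_iff, mem_map_Gamma1_iff,
    Matrix.SpecialLinearGroup.coe_neg]

lemma two_mem_gamma1Ring {N : ℕ} (hN : N ∣ 2) : 2 ∈ gamma1Ring N := by
  obtain ⟨e, he⟩ := hN
  have he' : (2 : ℝ) = N * e := by exact_mod_cast he
  refine ⟨e, 0, 0, e, ?_⟩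
  rw [← Matrix.diagonal_ofNat]
  ext i j
  fin_cases i <;> fin_cases j <;> simp [he']

lemma sub_one_mem_gamma1Ring_of_trace_eq_two {N : ℕ} (hN4 : N ≠ 4) {h : SL(2, ℝ)}
    (hh : h ∈ PMGamma1 N) (htr : h.1.trace = 2) :
    h.1 - 1 ∈ gamma1Ring N := by
  obtain hh | hh := mem_PMGamma1_iff.1 hh
  · exact hh
  have hN2 : N ∣ 2 := by
    obtain ⟨a, b, c, d, h_eq⟩ := hh
    have htr' : (N : ℤ) * (-a - d) = 4 := by
      have := congr_arg trace h_eq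
      simp only [trace_sub, trace_neg, htr, trace_one, Fintype.card_fin, trace_fin_two_of] at this
      push_cast at this
      exact_mod_cast (by linear_combination this : (N : ℝ) * (-a - d) = 4)
    have hN : N ∣ 4 := by exact_mod_cast Dvd.intro _ htr'
    have := Nat.le_of_dvd (by norm_num) hN
    interval_cases N <;> simp_all
  have h_eq : h.1 - 1 = -(-h.1 - 1 + 2) := by
    simp only [← one_add_one_eq_two (R := Matrix (Fin 2) (Fin 2) ℝ)]
    abel
  exact h_eq ▸ neg_mem (add_mem hh (two_mem_gamma1Ring hN2))

lemma coe_conj_sub_one {n R : Type*} [Fintype n] [DecidableEq n] [CommRing R]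
    (g h : SpecialLinearGroup n R) :
    (g * h * g⁻¹).1 - 1 = g * (h.1 - 1) * g⁻¹ := by
  have : g.1 * g⁻¹ = 1 := by rw [← Matrix.SpecialLinearGroup.coe_mul]; simp
  simp only [Matrix.SpecialLinearGroup.coe_mul, mul_sub, sub_mul, mul_one, this]

lemma conj_mem_PMGamma1 {N : ℕ} {g h : SL(2, ℝ)}
    (hg : ∀ X ∈ gamma1Ring N, g * X * g⁻¹ ∈ gamma1Ring N) (hh : h ∈ PMGamma1 N) :
    g * h * g⁻¹ ∈ PMGamma1 N := by
  rw [mem_PMGamma1_iff] at hh ⊢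
  rw [← Matrix.SpecialLinearGroup.coe_neg] at hh ⊢
  rw [← neg_mul, ← mul_neg, coe_conj_sub_one, coe_conj_sub_one]
  exact hh.imp (hg _) (hg _)

lemma conj_mem_gamma1Ring_of_mem_normalizer {N : ℕ} (hN4 : N ≠ 4) {g : SL(2, ℝ)}
    (hg : g ∈ Subgroup.normalizer (PMGamma1 N)) {X : Matrix (Fin 2) (Fin 2) ℝ}
    (hX : X ∈ gamma1Ring N) (htr : X.trace = 0) (hdet : X.det = 0) :
    g * X * g⁻¹ ∈ gamma1Ring N := by
  let h : SL(2, ℝ) := ⟨1 + X, by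
    rw [trace_fin_two] at htr
    rw [det_fin_two] at hdet ⊢
    simp
    linear_combination htr + hdet⟩
  have h_sub : h.1 - 1 = X := add_sub_cancel_left 1 X
  have h_mem : h ∈ PMGamma1 N := mem_PMGamma1_iff.2 (Or.inl (h_sub.symm ▸ hX))
  have h_trace : (g * h * g⁻¹).1.trace = 2 := by
    rw [Matrix.SpecialLinearGroup.coe_mul, trace_mul_comm, ← Matrix.SpecialLinearGroup.coe_mul,
      inv_mul_cancel_left]
    simp [h, htr]
  have := sub_one_mem_gamma1Ring_of_trace_eq_two hN4
    ((Subgroup.mem_normalizer_iff.1 hg h).1 h_mem) h_trace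
  rwa [coe_conj_sub_one, h_sub] at this

lemma conj_mul_conj {n R : Type*} [Fintype n] [DecidableEq n] [CommRing R]
    (g : SpecialLinearGroup n R) (X Y : Matrix n n R) :
    g * X * g⁻¹ * (g * Y * g⁻¹) = g * (X * Y) * g⁻¹ := by
  have : g⁻¹.1 * g = 1 := by rw [← Matrix.SpecialLinearGroup.coe_mul]; simp
  simp only [mul_assoc]
  rw [← mul_assoc g⁻¹.1 g.1, this, one_mul]

lemma conj_fin_two {R : Type*} [CommRing R] (g : SL(2, R)) (a b c d : R) :
    g * !![a, b; c, d] * g⁻¹ = !![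
      (g 0 0 * a + g 0 1 * c) * g 1 1 - (g 0 0 * b + g 0 1 * d) * g 1 0,
      (g 0 0 * b + g 0 1 * d) * g 0 0 - (g 0 0 * a + g 0 1 * c) * g 0 1;
      (g 1 0 * a + g 1 1 * c) * g 1 1 - (g 1 0 * b + g 1 1 * d) * g 1 0,
      (g 1 0 * b + g 1 1 * d) * g 0 0 - (g 1 0 * a + g 1 1 * c) * g 0 1] := by
  rw [Matrix.SpecialLinearGroup.coe_inv, adjugate_fin_two]
  ext i j
  fin_cases i <;> fin_cases j <;> simp [mul_apply, Fin.sum_univ_two] <;> ring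

/-- `g` is an Atkin–Lehner matrix `(√Q)⁻¹ • !![Q * x, y; Q * Q' * z, Q * w]` of level `Q * Q'`
attached to the divisor `Q`, with `x, y, z, w` integers. The sign in `±g` is absorbed into these
integers, and the scalar is kept on the side of `g`; for `Q = 0` the condition is vacuous. -/
def IsAtkinLehner (Q Q' : ℕ) (g : SL(2, ℝ)) : Prop :=
  ∃ x y z w : ℤ, √Q • g.1 = !![(Q : ℝ) * x, (y : ℝ); ((Q * Q' : ℕ) : ℝ) * z, (Q : ℝ) * w]

lemma smul_coe_inv_eq {R : Type*} [CommRing R] {t : R} {g : SL(2, R)} {a b c d : R}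
    (hg : t • g.1 = !![a, b; c, d]) : t • g⁻¹.1 = !![d, -b; -c, a] := by
  have h_adj := congr_arg adjugate hg
  rwa [adjugate_smul, adjugate_fin_two_of, ← Matrix.SpecialLinearGroup.coe_inv, Fintype.card_fin,
    pow_one] at h_adj

lemma det_eq_one_of_sqrt_smul_eq {Q Q' : ℕ} (hQ : 0 < Q) {g : SL(2, ℝ)} {x y z w : ℤ}
    (hg : √Q • g.1 = !![(Q : ℝ) * x, (y : ℝ); ((Q * Q' : ℕ) : ℝ) * z, (Q : ℝ) * w]) :
    Q * x * w - Q' * y * z = 1 := by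
  have hQ0 : (Q : ℝ) ≠ 0 := by positivity
  have h_det := congr_arg det hg
  rw [det_smul, Fintype.card_fin, g.det_coe, Real.sq_sqrt Q.cast_nonneg, det_fin_two_of,
    Nat.cast_mul] at h_det
  have : (Q : ℝ) * x * w - Q' * y * z = 1 := mul_left_cancel₀ hQ0 (by linear_combination -h_det)
  exact_mod_cast this

lemma exists_int_eq_mul_of_sq_eq {R : Type*} [CommRing R] [NoZeroDivisors R] {u c : R} {x : ℤ}
    (h : u ^ 2 = (c * x) ^ 2) : ∃ x' : ℤ, u = c * x' := by
  rcases sq_eq_sq_iff_eq_or_eq_neg.1 h with h | h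
  · exact ⟨x, h⟩
  · exact ⟨-x, by rw [h]; push_cast; ring⟩

namespace IsAtkinLehner

variable {Q Q' : ℕ} {g : SL(2, ℝ)}

lemma inv (hg : IsAtkinLehner Q Q' g) : IsAtkinLehner Q Q' g⁻¹ := by
  obtain ⟨x, y, z, w, hg⟩ := hg
  exact ⟨w, -y, -z, x, by simpa using smul_coe_inv_eq hg⟩

lemma conj_mem_gamma1Ring (hQ : 0 < Q) (hg : IsAtkinLehner Q Q' g) {X : Matrix (Fin 2) (Fin 2) ℝ}
    (hX : X ∈ gamma1Ring (Q * Q')) : g * X * g⁻¹ ∈ gamma1Ring (Q * Q') := by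
  obtain ⟨x, y, z, w, hg⟩ := hg
  obtain ⟨a, b, c, d, rfl⟩ := hX
  have hQ0 : (Q : ℝ) ≠ 0 := by positivity
  refine ⟨Q * x * w * a + y * w * c - x * z * b - Q' * y * z * d,
    Q * Q' * x * y * (d - a) - Q' * y ^ 2 * c + Q * x ^ 2 * b,
    Q * Q' * z * w * (a - d) + Q * w ^ 2 * c - Q' * z ^ 2 * b,
    Q * x * w * d - y * w * c + x * z * b - Q' * y * z * a, smul_right_injective _ hQ0 ?_⟩
  have h_smul (X : Matrix (Fin 2) (Fin 2) ℝ) :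
      (Q : ℝ) • (g * X * g⁻¹) = (√Q • g.1) * X * (√Q • g⁻¹.1) := by
    simp only [smul_mul_assoc, mul_smul_comm, smul_smul, Real.mul_self_sqrt Q.cast_nonneg]
  simp only [h_smul, hg, smul_coe_inv_eq hg, mul_fin_two, smul_of, smul_cons, smul_empty,
    smul_eq_mul]
  push_cast
  congr! 3 <;> ring_nf

lemma mem_normalizer (hQ : 0 < Q) (hg : IsAtkinLehner Q Q' g) :
    g ∈ Subgroup.normalizer (PMGamma1 (Q * Q')) := by
  refine Subgroup.mem_normalizer_iff.2 fun h ↦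
    ⟨conj_mem_PMGamma1 fun X ↦ hg.conj_mem_gamma1Ring hQ, fun hh ↦ ?_⟩
  simpa [mul_assoc] using conj_mem_PMGamma1 (fun X ↦ hg.inv.conj_mem_gamma1Ring hQ) hh

lemma of_sq_eq {x y z w : ℤ}
    (hx : g 0 0 ^ 2 = Q * x ^ 2) (hy : Q * g 0 1 ^ 2 = y ^ 2) (hz : g 1 0 ^ 2 = Q * (Q' * z) ^ 2)
    (hw : g 1 1 ^ 2 = Q * w ^ 2) : IsAtkinLehner Q Q' g := by
  have hQ : √(Q : ℝ) ^ 2 = Q := Real.sq_sqrt Q.cast_nonneg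
  obtain ⟨x', hx'⟩ : ∃ x' : ℤ, √Q * g 0 0 = Q * x' :=
    exists_int_eq_mul_of_sq_eq (x := x) (by rw [mul_pow, hQ, hx]; ring)
  obtain ⟨y', hy'⟩ : ∃ y' : ℤ, √Q * g 0 1 = 1 * y' :=
    exists_int_eq_mul_of_sq_eq (x := y) (by rw [mul_pow, hQ, hy, one_mul])
  obtain ⟨z', hz'⟩ : ∃ z' : ℤ, √Q * g 1 0 = (Q * Q' : ℕ) * z' :=
    exists_int_eq_mul_of_sq_eq (x := z) (by rw [mul_pow, hQ, hz]; push_cast; ring)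
  obtain ⟨w', hw'⟩ : ∃ w' : ℤ, √Q * g 1 1 = Q * w' :=
    exists_int_eq_mul_of_sq_eq (x := w) (by rw [mul_pow, hQ, hw]; ring)
  refine ⟨x', y', z', w', ?_⟩
  rw [eta_fin_two g.1, ← hx', ← hz', ← hw', ← one_mul (y' : ℝ), ← hy']
  simp

end IsAtkinLehner

lemma exists_associated_mul_pow_of_mul_eq {R : Type*} [CommRing R] [IsDomain R] [IsBezout R]
    {A B P Q c : R} {n : ℕ} (hPQ : P * Q ≠ 0) (hAB : IsCoprime A B) (hAQ : IsCoprime A Q)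
    (hPB : IsCoprime P B) (h : A * B = P * Q * c ^ n) : ∃ x, Associated (P * x ^ n) A := by
  obtain ⟨A, rfl⟩ : P ∣ A := hPB.dvd_of_dvd_mul_right ⟨Q * c ^ n, by rw [h, mul_assoc]⟩
  obtain ⟨B, rfl⟩ : Q ∣ B := hAQ.symm.dvd_of_dvd_mul_left ⟨P * c ^ n, by rw [h]; ring⟩
  have hc : A * B = c ^ n := mul_left_cancel₀ hPQ (by rw [← h]; ring)
  obtain ⟨x, hx⟩ := exists_associated_pow_of_mul_eq_pow'
    hAB.of_mul_left_right.of_mul_right_right hc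
  exact ⟨x, hx.mul_left P⟩

lemma exists_eq_mul_sq_of_isCoprime {A B P Q c u v : ℤ} (huv : IsCoprime u v) (hP : 0 < P)
    (hQ : 0 < Q) (hA : 0 ≤ A) (hAu : A ∣ u) (hPu : P ∣ u) (hBv : B ∣ v) (hQv : Q ∣ v)
    (h : A * B = P * Q * c ^ 2) : ∃ x, A = P * x ^ 2 := by
  obtain ⟨x, hx⟩ := exists_associated_mul_pow_of_mul_eq (by positivity)
    (huv.mono hAu hBv) (huv.mono hAu hQv) (huv.mono hPu hBv) h
  exact ⟨x, (Int.eq_of_associated_of_nonneg hx (by positivity) hA).symm⟩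

lemma exists_eq_mul_natCast_dvd_of_dvd_mul {N : ℕ} {a b : ℤ} (h : (N : ℤ) ∣ a * b) :
    ∃ Q Q' : ℕ, N = Q * Q' ∧ (Q : ℤ) ∣ a ∧ (Q' : ℤ) ∣ b := by
  rw [Int.natCast_dvd, Int.natAbs_mul] at h
  obtain ⟨Q, Q', hQ, hQ', rfl⟩ := exists_dvd_and_dvd_of_dvd_mul h
  exact ⟨Q, Q', rfl, Int.natCast_dvd.2 hQ, Int.natCast_dvd.2 hQ'⟩

lemma exists_eq_mul_sq_of_mul_eq_sq {N : ℕ} (hN : 0 < N) {A B C D k l m : ℤ} (hA : 0 ≤ A)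
    (hB : 0 ≤ B) (hC : 0 ≤ C) (hD : 0 ≤ D) (hAC : A * C = m ^ 2) (hBD : B * D = (m - 1) ^ 2)
    (hAB : A * B = N * k ^ 2) (hCD : C * D = N * l ^ 2) (hkl : m * (m - 1) = N * (k * l)) :
    ∃ Q Q' : ℕ, N = Q * Q' ∧ ∃ x y z w : ℤ,
      A = Q * x ^ 2 ∧ D = Q' * y ^ 2 ∧ B = Q' * z ^ 2 ∧ C = Q * w ^ 2 := by
  obtain ⟨Q, Q', rfl, hQm, hQ'm⟩ := exists_eq_mul_natCast_dvd_of_dvd_mul ⟨k * l, hkl⟩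
  have hQ : (0 : ℤ) < Q := by exact_mod_cast Nat.pos_of_mul_pos_right hN
  have hQ' : (0 : ℤ) < Q' := by exact_mod_cast Nat.pos_of_mul_pos_left hN
  have hm : IsCoprime (m ^ 2) ((m - 1) ^ 2) := IsCoprime.pow ⟨1, -1, by ring⟩
  have hQm' := dvd_pow hQm two_ne_zero
  have hQ'm' := dvd_pow hQ'm two_ne_zero
  have hAm : A ∣ m ^ 2 := ⟨C, hAC.symm⟩
  have hCm : C ∣ m ^ 2 := ⟨A, by rw [← hAC, mul_comm]⟩
  have hBm : B ∣ (m - 1) ^ 2 := ⟨D, hBD.symm⟩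
  have hDm : D ∣ (m - 1) ^ 2 := ⟨B, by rw [← hBD, mul_comm]⟩
  push_cast at hAB hCD
  obtain ⟨x, hx⟩ := exists_eq_mul_sq_of_isCoprime hm hQ hQ' hA hAm hQm' hBm hQ'm' hAB
  obtain ⟨y, hy⟩ := exists_eq_mul_sq_of_isCoprime hm.symm hQ' hQ hD hDm hQ'm' hCm hQm'
    (by rw [mul_comm D, hCD, mul_comm (Q : ℤ)])
  obtain ⟨z, hz⟩ := exists_eq_mul_sq_of_isCoprime hm.symm hQ' hQ hB hBm hQ'm' hAm hQm'
    (by rw [mul_comm B, hAB, mul_comm (Q : ℤ)])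
  obtain ⟨w, hw⟩ := exists_eq_mul_sq_of_isCoprime hm hQ hQ' hC hCm hQm' hDm hQ'm' hCD
  exact ⟨Q, Q', rfl, x, y, z, w, hx, hy, hz, hw⟩

lemma int_mul_eq_of_sq_eq {p q r s : ℝ} {N : ℕ} (hN : 0 < N) {A B C D k l m : ℤ}
    (hdet : p * s - q * r = 1) (hA : p ^ 2 = A) (hB : r ^ 2 = N * B) (hC : s ^ 2 = C)
    (hD : N * q ^ 2 = D) (hk : p * r = N * k) (hl : q * s = l) (hm : p * s = m) :
    A * C = m ^ 2 ∧ B * D = (m - 1) ^ 2 ∧ A * B = N * k ^ 2 ∧ C * D = N * l ^ 2 ∧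
      m * (m - 1) = N * (k * l) := by
  have hN0 : (N : ℝ) ≠ 0 := by positivity
  have hqr : q * r = m - 1 := by linear_combination hm - hdet
  refine ⟨?_, ?_, ?_, ?_, ?_⟩ <;> apply Int.cast_injective (α := ℝ) <;> push_cast
  · rw [← hA, ← hC, ← hm, mul_pow]
  · rw [← hD, ← hqr]
    linear_combination -q ^ 2 * hB
  · apply mul_left_cancel₀ hN0
    rw [mul_left_comm, ← hB, ← hA]
    linear_combination (p * r + N * k) * hk
  · rw [← hC, ← hD, ← hl]
    ring
  · rw [← hqr, ← hm, ← hl]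
    linear_combination q * s * hk

section Necessity

variable {N : ℕ} {g : SL(2, ℝ)}

lemma exists_int_first_column (hN4 : N ≠ 4) (hg : g ∈ Subgroup.normalizer (PMGamma1 N)) :
    ∃ A B k : ℤ, g 0 0 ^ 2 = A ∧ g 1 0 ^ 2 = N * B ∧ g 0 0 * g 1 0 = N * k := by
  have h := conj_mem_gamma1Ring_of_mem_normalizer hN4 hg (upper_mem_gamma1Ring N)
    (by simp) (by simp)
  rw [conj_fin_two, fin_two_mem_gamma1Ring_iff] at h
  obtain ⟨-, ⟨A, hA⟩, ⟨B, hB⟩, ⟨k, hk⟩⟩ := h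
  refine ⟨A, -B, k, ?_, ?_, ?_⟩
  · linear_combination hA
  · push_cast
    linear_combination -hB
  · linear_combination hk

lemma exists_int_second_column (hN : 0 < N) (hN4 : N ≠ 4)
    (hg : g ∈ Subgroup.normalizer (PMGamma1 N)) :
    ∃ C D l : ℤ, g 1 1 ^ 2 = C ∧ N * g 0 1 ^ 2 = D ∧ g 0 1 * g 1 1 = l := by
  have hN0 : (N : ℝ) ≠ 0 := by positivity
  have h := conj_mem_gamma1Ring_of_mem_normalizer hN4 hg (lower_mem_gamma1Ring N)
    (by simp) (by simp)
  rw [conj_fin_two, fin_two_mem_gamma1Ring_iff] at h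
  obtain ⟨⟨l, hl⟩, ⟨D, hD⟩, ⟨C, hC⟩, -⟩ := h
  refine ⟨C, -D, l, ?_, ?_, ?_⟩
  · exact mul_left_cancel₀ hN0 (by linear_combination hC)
  · push_cast
    linear_combination -hD
  · exact mul_left_cancel₀ hN0 (by linear_combination hl)

lemma exists_int_diag_mul (hN : 0 < N) (hN4 : N ≠ 4)
    (hg : g ∈ Subgroup.normalizer (PMGamma1 N)) : ∃ m : ℤ, g 0 0 * g 1 1 = m := by
  have hN0 : (N : ℝ) ≠ 0 := by positivity
  have h := mul_mem
    (conj_mem_gamma1Ring_of_mem_normalizer hN4 hg (upper_mem_gamma1Ring N) (by simp) (by simp))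
    (conj_mem_gamma1Ring_of_mem_normalizer hN4 hg (lower_mem_gamma1Ring N) (by simp) (by simp))
  have h_mul : !![0, 1; 0, 0] * !![0, 0; (N : ℝ), 0] = !![(N : ℝ), 0; 0, 0] := by
    rw [mul_fin_two]
    simp only [zero_mul, one_mul, mul_zero, zero_add, add_zero]
  rw [conj_mul_conj, h_mul, conj_fin_two, fin_two_mem_gamma1Ring_iff] at h
  obtain ⟨⟨m, hm⟩, -⟩ := h
  exact ⟨m, mul_left_cancel₀ hN0 (by linear_combination hm)⟩

lemma exists_isAtkinLehner_of_mem_normalizer (hN : 0 < N) (hN4 : N ≠ 4)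
    (hg : g ∈ Subgroup.normalizer (PMGamma1 N)) :
    ∃ Q Q' : ℕ, N = Q * Q' ∧ IsAtkinLehner Q Q' g := by
  obtain ⟨A, B, k, hA, hB, hk⟩ := exists_int_first_column hN4 hg
  obtain ⟨C, D, l, hC, hD, hl⟩ := exists_int_second_column hN hN4 hg
  obtain ⟨m, hm⟩ := exists_int_diag_mul hN hN4 hg
  have hdet : g 0 0 * g 1 1 - g 0 1 * g 1 0 = 1 := (det_fin_two g.1).symm.trans g.det_coe
  obtain ⟨hAC, hBD, hAB, hCD, hkl⟩ := int_mul_eq_of_sq_eq hN hdet hA hB hC hD hk hl hm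
  have hA0 : (0 : ℝ) ≤ A := hA ▸ sq_nonneg _
  have hB0 : (0 : ℝ) ≤ B := nonneg_of_mul_nonneg_right (hB ▸ sq_nonneg _) (by positivity)
  have hC0 : (0 : ℝ) ≤ C := hC ▸ sq_nonneg _
  have hD0 : (0 : ℝ) ≤ D := hD ▸ by positivity
  obtain ⟨Q, Q', rfl, x, y, z, w, rfl, rfl, rfl, rfl⟩ := exists_eq_mul_sq_of_mul_eq_sq hN
    (Int.cast_nonneg_iff.1 hA0) (Int.cast_nonneg_iff.1 hB0) (Int.cast_nonneg_iff.1 hC0)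
    (Int.cast_nonneg_iff.1 hD0) hAC hBD hAB hCD hkl
  have hQ' : (Q' : ℝ) ≠ 0 := by exact_mod_cast (Nat.pos_of_mul_pos_left hN).ne'
  push_cast at hA hB hC hD
  refine ⟨Q, Q', rfl, IsAtkinLehner.of_sq_eq (y := y) (z := z) hA
    (mul_left_cancel₀ hQ' ?_) ?_ hC⟩
  · linear_combination hD
  · linear_combination hB

end Necessity

/-- **Theorem of Kim–Koo and Lang.** For `N ≠ 4`, a matrix `g ∈ SL(2, ℝ)` normalizes
`±Γ₁(N)` if and only if `±g = (1/√Q)·!![Qx, y; Nz, Qw]` for some Hall divisor `Q` of `N`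
and integers `x, y, z, w` with `Qxw - (N/Q)yz = 1`. -/
theorem kim_koo_lang_normalizer_Gamma1
    (N : ℕ) (hN : 0 < N) (hN4 : N ≠ 4)
    (g : Matrix.SpecialLinearGroup (Fin 2) ℝ) :
    g ∈ Subgroup.normalizer (PMGamma1 N) ↔
      ∃ Q : ℕ, Q ∣ N ∧ Nat.gcd Q (N / Q) = 1 ∧
        ∃ x y z w : ℤ, (Q : ℤ) * x * w - ((N : ℤ) / (Q : ℤ)) * y * z = 1 ∧
          ((g : Matrix (Fin 2) (Fin 2) ℝ) =
              (Real.sqrt Q)⁻¹ •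
                !![(Q : ℝ) * (x : ℝ), (y : ℝ); (N : ℝ) * (z : ℝ), (Q : ℝ) * (w : ℝ)] ∨
            (g : Matrix (Fin 2) (Fin 2) ℝ) =
              -((Real.sqrt Q)⁻¹ •
                !![(Q : ℝ) * (x : ℝ), (y : ℝ); (N : ℝ) * (z : ℝ), (Q : ℝ) * (w : ℝ)])) := by
  constructor
  · intro hg
    obtain ⟨Q, Q', rfl, x, y, z, w, hM⟩ := exists_isAtkinLehner_of_mem_normalizer hN hN4 hg
    have hQ : 0 < Q := Nat.pos_of_mul_pos_right hN
    have hdet := det_eq_one_of_sqrt_smul_eq hQ hM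
    have hcop : Nat.Coprime Q Q' := Nat.isCoprime_iff_coprime.1
      ⟨x * w, -(y * z), by linear_combination hdet⟩
    refine ⟨Q, Dvd.intro _ rfl, by rwa [Nat.mul_div_cancel_left _ hQ], x, y, z, w, ?_, Or.inl ?_⟩
    · rwa [← Int.natCast_div, Nat.mul_div_cancel_left _ hQ]
    · rwa [eq_inv_smul_iff₀ (by positivity)]
  · rintro ⟨Q, ⟨Q', rfl⟩, -, x, y, z, w, -, hM⟩
    have hQ : 0 < Q := Nat.pos_of_mul_pos_right hN
    refine IsAtkinLehner.mem_normalizer hQ ?_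
    have hQ0 : √(Q : ℝ) ≠ 0 := by positivity
    rw [← smul_neg, eq_inv_smul_iff₀ hQ0, eq_inv_smul_iff₀ hQ0] at hM
    rcases hM with hM | hM
    · exact ⟨x, y, z, w, hM⟩
    · exact ⟨-x, -y, -z, -w, by simpa using hM⟩
end

section
/- Let N ≥ 5 be an integer. The quotient of the normalizer in SL(2,ℝ) of the subgroup ±Γ(N) by ±Γ(N) is isomorphic as a group to PSL(2, ℤ/Nℤ), i.e. to the quotient of SL(2, ℤ/Nℤ) by the subgroup {±I}. -/
open Matrix CongruenceSubgroup

/-- The subgroup `±Γ(N)` of `SL(2, ℝ)`, generated by the image of `Γ(N)` and `-1`. -/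
def PMGamma (N : ℕ) : Subgroup (Matrix.SpecialLinearGroup (Fin 2) ℝ) :=
  (Gamma N).map SL2ZtoSL2R ⊔ Subgroup.zpowers (-1)

/-- The subgroup `{±1}` of `SL(2, ℤ/Nℤ)` is normal (it is central). -/
instance zpowersNegOneNormal (N : ℕ) :
    (Subgroup.zpowers (-1 : Matrix.SpecialLinearGroup (Fin 2) (ZMod N))).Normal := by
  constructor
  intro x hx g
  obtain ⟨k, rfl⟩ := Subgroup.mem_zpowers_iff.mp hx
  refine Subgroup.mem_zpowers_iff.mpr ⟨k, ?_⟩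
  have h : Commute g ((-1 : Matrix.SpecialLinearGroup (Fin 2) (ZMod N)) ^ k) :=
    ((Commute.neg_one_left g).symm).zpow_right k
  rw [h.eq, mul_assoc, mul_inv_cancel, mul_one]

/-!
Since `±Γ(N)` is the preimage of `{±1}` under reduction modulo `N`, and reduction is surjective
onto `SL(2, ℤ/Nℤ)`, it suffices that the normalizer of `±Γ(N)` in `SL(2, ℝ)` is `SL(2, ℤ)`.

If `h` normalizes `±Γ(N)`, then `±Γ(N)` contains the conjugate by `h` of the transvection with
upper right entry `N`. The upper right entry of this conjugate is `N h₀₀²`, so `h₀₀²` is an integer.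
As `SL(2, ℤ)` normalizes `±Γ(N)`, the same holds for every `γ h δ` with `γ, δ ∈ SL(2, ℤ)`.
Polarizing, all products of two entries of `h` are integers. Hence the entries are integer
multiples of a common `s` with `s²` an integer, and `det h = 1` forces `s² = 1`.
-/

section IntegerMultiples

theorem mem_range_of_mul_mem_of_sq_mem {R S : Type*} [CommRing R] [IsDomain R]
    [IsIntegrallyClosed R] [CommRing S] [IsDomain S] {f : R →+* S} (hf : Function.Injective f)
    {n : R} (hn : n ≠ 0) {x : S} (hnx : f n * x ∈ f.range) (hx : x ^ 2 ∈ f.range) :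
    x ∈ f.range := by
  obtain ⟨k, hk⟩ := hnx
  obtain ⟨m, hm⟩ := hx
  have hsq : k ^ 2 = n ^ 2 * m := hf (by rw [map_pow, map_mul, map_pow, hk, hm, mul_pow])
  obtain ⟨l, rfl⟩ := (IsIntegrallyClosed.pow_dvd_pow_iff two_ne_zero).mp ⟨m, hsq⟩
  have hfn : f n ≠ 0 := (map_ne_zero_iff f hf).mpr hn
  exact ⟨l, mul_left_cancel₀ hfn (by rw [← map_mul, hk])⟩

theorem mul_mem_range_of_add_sq_mem {S : Type*} [CommRing S] [IsDomain S] [CharZero S] {x y : S}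
    (hx : x ^ 2 ∈ (Int.castRingHom S).range) (hy : y ^ 2 ∈ (Int.castRingHom S).range)
    (hxy : (x + y) ^ 2 ∈ (Int.castRingHom S).range) : x * y ∈ (Int.castRingHom S).range := by
  refine mem_range_of_mul_mem_of_sq_mem (RingHom.injective_int _) two_ne_zero ?_ ?_
  · convert sub_mem (sub_mem hxy hx) hy using 1
    rw [map_ofNat]
    ring
  · rw [mul_pow]
    exact mul_mem hx hy

theorem exists_int_sq_mul_squarefree (n : ℤ) : ∃ r m : ℤ, r ^ 2 * m = n ∧ Squarefree m := by
  obtain ⟨m, r, hn, hm⟩ := Nat.sq_mul_squarefree n.natAbs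
  rcases n.natAbs_eq with h | h
  · exact ⟨r, m, by rw [h, ← hn]; push_cast; rfl, Int.squarefree_natCast.mpr hm⟩
  · refine ⟨r, -m, by rw [h, ← hn]; push_cast; ring, ?_⟩
    rwa [← Int.squarefree_natAbs, Int.natAbs_neg, Int.natAbs_natCast]

theorem mul_dvd_of_sq_mul_dvd_sq {R : Type*} [CommRing R] [IsDomain R] [IsIntegrallyClosed R]
    [DecompositionMonoid R] {r m p : R} (hr : r ≠ 0) (hm : Squarefree m)
    (h : r ^ 2 * m ∣ p ^ 2) : r * m ∣ p := by
  obtain ⟨z, rfl⟩ : r ∣ p :=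
    (IsIntegrallyClosed.pow_dvd_pow_iff two_ne_zero).mp (dvd_of_mul_right_dvd h)
  rw [mul_pow, mul_dvd_mul_iff_left (pow_ne_zero 2 hr)] at h
  exact mul_dvd_mul_left r ((hm.dvd_pow_iff_dvd two_ne_zero).mp h)

theorem exists_eq_intCast_mul_of_mul_mem_range {ι K : Type*} [Field K] [CharZero K] {x : ι → K}
    (h : ∀ i j, x i * x j ∈ (Int.castRingHom K).range) :
    ∃ s : K, s ^ 2 ∈ (Int.castRingHom K).range ∧ ∀ i, ∃ k : ℤ, x i = k * s := by
  by_cases hx : ∀ i, x i = 0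
  · exact ⟨0, by simp, fun i => ⟨0, by simp [hx i]⟩⟩
  obtain ⟨j, hj⟩ := not_forall.mp hx
  obtain ⟨n, hn⟩ := h j j
  obtain ⟨r, m, rfl, hm⟩ := exists_int_sq_mul_squarefree n
  have hrm : (r : K) ^ 2 * m = x j * x j := by simpa using hn
  have hr : (r : K) ≠ 0 := by
    intro hr
    simp [hr, hj] at hrm
  -- `r * m` divides each integer `x i * x j`, as its square `r ^ 2 * m * x i ^ 2` shows.
  refine ⟨x j / r, ⟨m, ?_⟩, fun i => ?_⟩
  · rw [eq_intCast, div_pow, eq_div_iff (pow_ne_zero 2 hr)]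
    linear_combination hrm
  obtain ⟨p, hp⟩ := h i j
  obtain ⟨q, hq⟩ := h i i
  rw [eq_intCast] at hp hq
  have hpq : p ^ 2 = r ^ 2 * m * q := by
    have : (p : K) ^ 2 = r ^ 2 * m * q := by rw [hp, hq, hrm]; ring
    exact_mod_cast this
  obtain ⟨w, rfl⟩ := mul_dvd_of_sq_mul_dvd_sq (Int.cast_ne_zero.mp hr) hm ⟨q, hpq⟩
  refine ⟨w, mul_right_cancel₀ hj ?_⟩
  rw [← hp]
  push_cast
  field_simp
  linear_combination (w : K) * hrm

end IntegerMultiples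

section SpecialLinearGroup

variable {n : Type*} [Fintype n] [DecidableEq n]

theorem mem_range_specialLinearGroup_map_iff {R S : Type*} [CommRing R] [CommRing S] {f : R →+* S}
    (hf : Function.Injective f) {g : SpecialLinearGroup n S} :
    g ∈ (SpecialLinearGroup.map (n := n) f).range ↔ ∀ i j, g i j ∈ f.range := by
  refine ⟨?_, fun h => ?_⟩
  · rintro ⟨γ, rfl⟩ i j
    exact ⟨γ i j, rfl⟩
  choose A hA using h
  have hmap : f.mapMatrix (Matrix.of A) = g := Matrix.ext hA
  have hdet : (Matrix.of A).det = 1 :=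
    hf (by rw [RingHom.map_det, hmap, g.det_coe, map_one])
  exact ⟨⟨Matrix.of A, hdet⟩, Subtype.ext hmap⟩

theorem mem_range_map_intCast_of_mul_mem_range {K : Type*} [Field K] [LinearOrder K]
    [IsStrictOrderedRing K] {g : SpecialLinearGroup n K}
    (h : ∀ i j k l, g i j * g k l ∈ (Int.castRingHom K).range) :
    g ∈ (SpecialLinearGroup.map (n := n) (Int.castRingHom K)).range := by
  rw [mem_range_specialLinearGroup_map_iff (RingHom.injective_int _)]
  intro i j
  obtain ⟨s, ⟨m, hm⟩, hs⟩ := exists_eq_intCast_mul_of_mul_mem_range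
    (x := fun e : n × n => g e.1 e.2) fun e e' => h e.1 e.2 e'.1 e'.2
  choose A hA using fun i j => hs (i, j)
  rw [eq_intCast] at hm
  have hg : (g : Matrix n n K) = s • (Matrix.of A).map (Int.cast : ℤ → K) := by
    ext i j
    simp [hA, mul_comm]
  have hdet : m ^ Fintype.card n * (Matrix.of A).det ^ 2 = 1 := by
    have hcast : (m : K) ^ Fintype.card n * ((Matrix.of A).det : K) ^ 2 = 1 := by
      rw [Int.cast_det, hm, ← pow_mul, mul_comm 2, pow_mul, ← mul_pow, ← Matrix.det_smul, ← hg,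
        g.det_coe, one_pow]
    exact_mod_cast hcast
  have hm_unit : IsUnit m :=
    have : Nonempty n := ⟨i⟩
    (isUnit_pow_iff Fintype.card_ne_zero).mp (IsUnit.of_mul_eq_one _ hdet)
  have hm_nonneg : 0 ≤ m := by exact_mod_cast hm ▸ sq_nonneg s
  have hs_one : s ^ 2 = 1 := by
    rw [← hm, Int.isUnit_eq_one_or hm_unit |>.resolve_right (by omega), Int.cast_one]
  rw [hA i j]
  rcases sq_eq_one_iff.mp hs_one with rfl | rfl
  · exact ⟨A i j, by simp⟩
  · exact ⟨-A i j, by simp⟩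

end SpecialLinearGroup

section Transvection

variable {n R S : Type*} [Fintype n] [DecidableEq n] [CommRing R] [CommRing S]

theorem SL_map_transvection (f : R →+* S) {i j : n} (hij : i ≠ j) (t : R) :
    SpecialLinearGroup.map f (SpecialLinearGroup.transvection hij t) =
      SpecialLinearGroup.transvection hij (f t) := by
  ext k l
  simp [SpecialLinearGroup.transvection_coe, Matrix.one_apply, Matrix.single_apply, apply_ite f]

theorem SL_mul_transvection_apply_same {i j : n} (hij : i ≠ j) (t : R) (g : SpecialLinearGroup n R)
    (k : n) : (g * SpecialLinearGroup.transvection hij t) k j = g k j + t * g k i :=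
  Matrix.mul_transvection_apply_same i j k t g

theorem SL_transvection_mul_apply_same {i j : n} (hij : i ≠ j) (t : R) (g : SpecialLinearGroup n R)
    (k : n) : (SpecialLinearGroup.transvection hij t * g) i k = g i k + t * g j k :=
  Matrix.transvection_mul_apply_same i j k t g

theorem SL_mul_transvection_apply_of_ne {i j : n} (hij : i ≠ j) (t : R) (g : SpecialLinearGroup n R)
    (k : n) {l : n} (hl : l ≠ j) : (g * SpecialLinearGroup.transvection hij t) k l = g k l :=
  Matrix.mul_transvection_apply_of_ne i j k l hl t g

theorem SL_transvection_mul_apply_of_ne {i j : n} (hij : i ≠ j) (t : R) (g : SpecialLinearGroup n R)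
    {k : n} (hk : k ≠ i) (l : n) : (SpecialLinearGroup.transvection hij t * g) k l = g k l :=
  Matrix.transvection_mul_apply_of_ne i j k l hk t g

theorem SL2_conj_transvection_apply_zero_one (g : SpecialLinearGroup (Fin 2) R) (t : R) :
    (g * SpecialLinearGroup.transvection (zero_ne_one' (Fin 2)) t * g⁻¹) 0 1 = t * g 0 0 ^ 2 := by
  have mul_inv_apply (A : SpecialLinearGroup (Fin 2) R) :
      (A * g⁻¹) 0 1 = -(A 0 0 * g 0 1) + A 0 1 * g 0 0 := by
    simp [Matrix.mul_apply, adjugate_fin_two]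
  rw [mul_inv_apply, SL_mul_transvection_apply_same,
    SL_mul_transvection_apply_of_ne _ _ _ _ zero_ne_one]
  ring

theorem SL2_exists_eq_transvection_mul {g γ : SpecialLinearGroup (Fin 2) R} (h : g 1 = γ 1) :
    ∃ t : R, g = SpecialLinearGroup.transvection (zero_ne_one' (Fin 2)) t * γ := by
  have hg := g.det_coe
  have hγ := γ.det_coe
  rw [Matrix.det_fin_two] at hg hγ
  rw [h] at hg
  refine ⟨g 0 1 * γ 0 0 - g 0 0 * γ 0 1, ?_⟩
  ext i j
  match i with
  | 0 =>
    rw [SL_transvection_mul_apply_same]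
    match j with
    | 0 => linear_combination γ 0 0 * hg - g 0 0 * hγ
    | 1 => linear_combination γ 0 1 * hg - g 0 1 * hγ
  | 1 => rw [SL_transvection_mul_apply_of_ne _ _ _ one_ne_zero, h]

end Transvection

section Reduction

theorem SL2_map_surjective_of_forall_isCoprime {R S : Type*} [CommRing R] [CommRing S] {f : R →+* S}
    (hf : Function.Surjective f)
    (hrow : ∀ c d : S, IsCoprime c d → ∃ c' d' : R, IsCoprime c' d' ∧ f c' = c ∧ f d' = d) :
    Function.Surjective (SpecialLinearGroup.map (n := Fin 2) f) := by
  intro g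
  obtain ⟨c, d, hcd, hc, hd⟩ := hrow _ _ (g.isCoprime_row 1)
  obtain ⟨γ, rfl, rfl⟩ := hcd.exists_SL2_row 1
  have hgγ : g 1 = SpecialLinearGroup.map f γ 1 := by
    ext j
    fin_cases j
    exacts [hc.symm, hd.symm]
  obtain ⟨t, ht⟩ := SL2_exists_eq_transvection_mul hgγ
  obtain ⟨t, rfl⟩ := hf t
  exact ⟨SpecialLinearGroup.transvection (zero_ne_one' (Fin 2)) t * γ, by
    rw [map_mul, SL_map_transvection, ← ht]⟩

theorem exists_isCoprime_add_mul {c n : ℕ} {d : ℤ} (hc : c ≠ 0) (h : IsCoprime (c.gcd n : ℤ) d) :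
    ∃ t : ℤ, IsCoprime (c : ℤ) (d + n * t) := by
  have : NeZero c := ⟨hc⟩
  have hunit : IsUnit (d : ZMod (c.gcd n)) := (ZMod.coe_int_isUnit_iff_isCoprime _ _).mpr h
  obtain ⟨u, hu⟩ := ZMod.unitsMap_surjective (c.gcd_dvd_left n) hunit.unit
  obtain ⟨e, he⟩ := ZMod.intCast_surjective (u : ZMod c)
  have hce : IsCoprime (c : ℤ) e := by
    rw [← ZMod.coe_int_isUnit_iff_isCoprime, he]
    exact u.isUnit
  have hed : (e : ZMod (c.gcd n)) = d := by
    rw [← hunit.unit_spec, ← hu, ZMod.unitsMap_val, ← he, ZMod.cast_intCast (c.gcd_dvd_left n)]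
  obtain ⟨q, hq⟩ := (ZMod.intCast_eq_intCast_iff_dvd_sub _ _ _).mp hed
  rw [Nat.gcd_eq_gcd_ab] at hq
  refine ⟨-(c.gcdB n * q), ?_⟩
  rw [show d + n * -(c.gcdB n * q) = e + c * (c.gcdA n * q) by linear_combination hq]
  exact IsCoprime.add_mul_left_right_iff.mpr hce

theorem exists_isCoprime_intCast_eq {N : ℕ} [NeZero N] {c d : ZMod N} (h : IsCoprime c d) :
    ∃ c' d' : ℤ, IsCoprime c' d' ∧ (c' : ZMod N) = c ∧ (d' : ZMod N) = d := by
  obtain ⟨c', rfl, hc'⟩ : ∃ c' : ℕ, (c' : ZMod N) = c ∧ c' ≠ 0 :=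
    ⟨c.val + N, by simp, by simp [NeZero.ne N]⟩
  obtain ⟨d', rfl⟩ := ZMod.intCast_surjective d
  have hgcd : IsCoprime (c'.gcd N : ℤ) d' := by
    have hmod := h.map (ZMod.castHom (c'.gcd_dvd_right N) (ZMod (c'.gcd N)))
    rwa [map_natCast, map_intCast, (ZMod.natCast_eq_zero_iff _ _).mpr (c'.gcd_dvd_left N),
      isCoprime_zero_left, ZMod.coe_int_isUnit_iff_isCoprime] at hmod
  obtain ⟨t, ht⟩ := exists_isCoprime_add_mul hc' hgcd
  exact ⟨c', d' + N * t, ht, by simp, by simp⟩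

theorem SL2_map_intCast_zmod_surjective (N : ℕ) [NeZero N] :
    Function.Surjective (SpecialLinearGroup.map (n := Fin 2) (Int.castRingHom (ZMod N))) :=
  SL2_map_surjective_of_forall_isCoprime ZMod.intCast_surjective fun _ _ =>
    exists_isCoprime_intCast_eq

end Reduction

section PMGamma

theorem SL2ZtoSL2R_injective : Function.Injective SL2ZtoSL2R :=
  SpecialLinearGroup.map_intCast_injective

theorem PMGamma_eq_map (N : ℕ) :
    PMGamma N = ((Subgroup.zpowers (-1)).comap
      (SpecialLinearGroup.map (Int.castRingHom (ZMod N)))).map SL2ZtoSL2R := by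
  have hneg {R : Type} [CommRing R] : SpecialLinearGroup.map (Int.castRingHom R)
      (-1 : SpecialLinearGroup (Fin 2) ℤ) = -1 := by
    ext i j
    simp
  have hcomap : (Subgroup.zpowers (-1)).comap (SpecialLinearGroup.map (Int.castRingHom (ZMod N))) =
      Subgroup.zpowers (-1) ⊔ Gamma N := by
    rw [← hneg, ← MonoidHom.map_zpowers, Subgroup.comap_map_eq]
    rfl
  rw [hcomap, Subgroup.map_sup, MonoidHom.map_zpowers, sup_comm, PMGamma, SL2ZtoSL2R, hneg]

theorem comap_SL2ZtoSL2R_PMGamma (N : ℕ) :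
    (PMGamma N).comap SL2ZtoSL2R =
      (Subgroup.zpowers (-1)).comap (SpecialLinearGroup.map (Int.castRingHom (ZMod N))) := by
  rw [PMGamma_eq_map, Subgroup.comap_map_eq_self_of_injective SL2ZtoSL2R_injective]

theorem range_SL2ZtoSL2R_le_normalizer (N : ℕ) :
    SL2ZtoSL2R.range ≤ Subgroup.normalizer (PMGamma N) := by
  rw [PMGamma_eq_map, MonoidHom.range_eq_map, ← Subgroup.normalizer_eq_top
    (H := (Subgroup.zpowers (-1)).comap (SpecialLinearGroup.map (Int.castRingHom (ZMod N))))]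
  exact Subgroup.le_normalizer_map _

theorem exists_apply_zero_one_eq_of_mem_PMGamma {N : ℕ} {x : SpecialLinearGroup (Fin 2) ℝ}
    (hx : x ∈ PMGamma N) : ∃ k : ℤ, x 0 1 = N * k := by
  rw [PMGamma_eq_map] at hx
  obtain ⟨γ, ⟨e, he⟩, rfl⟩ := hx
  have hγ : (γ 0 1 : ZMod N) = 0 := by
    change SpecialLinearGroup.map (Int.castRingHom (ZMod N)) γ 0 1 = 0
    rw [← he]
    rcases Int.even_or_odd e with h | h <;> simp [h.neg_one_zpow]
  obtain ⟨k, hk⟩ := (ZMod.intCast_zmod_eq_zero_iff_dvd _ N).mp hγ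
  exact ⟨k, by simp [SL2ZtoSL2R, hk]⟩

theorem transvection_natCast_mem_PMGamma (N : ℕ) :
    SpecialLinearGroup.transvection (zero_ne_one' (Fin 2)) (N : ℝ) ∈ PMGamma N := by
  refine Subgroup.mem_sup_left
    ⟨SpecialLinearGroup.transvection (zero_ne_one' (Fin 2)) (N : ℤ), ?_, ?_⟩
  · rw [SetLike.mem_coe, Gamma_mem', SL_map_transvection]
    simp
  · rw [SL2ZtoSL2R, SL_map_transvection, map_natCast]

end PMGamma

section Normalizer

variable {N : ℕ} [NeZero N] {h : SpecialLinearGroup (Fin 2) ℝ}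

theorem zero_zero_sq_mem_range_of_mem_normalizer (hh : h ∈ Subgroup.normalizer (PMGamma N)) :
    h 0 0 ^ 2 ∈ (Int.castRingHom ℝ).range := by
  obtain ⟨k, hk⟩ := exists_apply_zero_one_eq_of_mem_PMGamma
    ((Subgroup.mem_normalizer_iff.mp hh _).mp (transvection_natCast_mem_PMGamma N))
  rw [SL2_conj_transvection_apply_zero_one] at hk
  exact ⟨k, (mul_left_cancel₀ (NeZero.ne (N : ℝ)) hk).symm⟩

theorem sq_mem_range_of_mem_normalizer (hh : h ∈ Subgroup.normalizer (PMGamma N)) (i j : Fin 2) :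
    h i j ^ 2 ∈ (Int.castRingHom ℝ).range := by
  have hS := range_SL2ZtoSL2R_le_normalizer N ⟨ModularGroup.S, rfl⟩
  have coe_S : (SL2ZtoSL2R ModularGroup.S : Matrix (Fin 2) (Fin 2) ℝ) = !![0, -1; 1, 0] := by
    rw [SL2ZtoSL2R, SpecialLinearGroup.map_apply_coe, ModularGroup.coe_S]
    ext i j
    fin_cases i <;> fin_cases j <;> simp
  have mul_S (g : SpecialLinearGroup (Fin 2) ℝ) (i : Fin 2) :
      (g * SL2ZtoSL2R ModularGroup.S) i 0 = g i 1 := by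
    simp [coe_S, Matrix.mul_apply]
  have S_mul (g : SpecialLinearGroup (Fin 2) ℝ) :
      (SL2ZtoSL2R ModularGroup.S * g) 0 0 ^ 2 = g 1 0 ^ 2 := by
    simp [coe_S, Matrix.mul_apply]
  fin_cases i <;> fin_cases j
  · exact zero_zero_sq_mem_range_of_mem_normalizer hh
  · exact mul_S h 0 ▸ zero_zero_sq_mem_range_of_mem_normalizer (mul_mem hh hS)
  · exact S_mul h ▸ zero_zero_sq_mem_range_of_mem_normalizer (mul_mem hS hh)
  · have h11 := zero_zero_sq_mem_range_of_mem_normalizer (mul_mem hS (mul_mem hh hS))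
    rwa [S_mul, mul_S] at h11

theorem transvection_one_mem_normalizer (N : ℕ) :
    SpecialLinearGroup.transvection (zero_ne_one' (Fin 2)) (1 : ℝ) ∈
      Subgroup.normalizer (PMGamma N : Set (SpecialLinearGroup (Fin 2) ℝ)) :=
  range_SL2ZtoSL2R_le_normalizer N ⟨SpecialLinearGroup.transvection (zero_ne_one' (Fin 2)) 1, by
    rw [SL2ZtoSL2R, SL_map_transvection, map_one]⟩

theorem row_mul_mem_range_of_mem_normalizer (hh : h ∈ Subgroup.normalizer (PMGamma N))
    (i : Fin 2) : h i 0 * h i 1 ∈ (Int.castRingHom ℝ).range := by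
  refine mul_mem_range_of_add_sq_mem (sq_mem_range_of_mem_normalizer hh i 0)
    (sq_mem_range_of_mem_normalizer hh i 1) ?_
  have hadd := sq_mem_range_of_mem_normalizer (mul_mem hh (transvection_one_mem_normalizer N)) i 1
  rwa [SL_mul_transvection_apply_same, one_mul, add_comm] at hadd

theorem col_mul_mem_range_of_mem_normalizer (hh : h ∈ Subgroup.normalizer (PMGamma N))
    (j : Fin 2) : h 0 j * h 1 j ∈ (Int.castRingHom ℝ).range := by
  refine mul_mem_range_of_add_sq_mem (sq_mem_range_of_mem_normalizer hh 0 j)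
    (sq_mem_range_of_mem_normalizer hh 1 j) ?_
  have hadd := sq_mem_range_of_mem_normalizer (mul_mem (transvection_one_mem_normalizer N) hh) 0 j
  rwa [SL_transvection_mul_apply_same, one_mul] at hadd

theorem diag_mul_mem_range_of_mem_normalizer (hh : h ∈ Subgroup.normalizer (PMGamma N)) :
    h 0 0 * h 1 1 ∈ (Int.castRingHom ℝ).range := by
  have hrow := row_mul_mem_range_of_mem_normalizer
    (mul_mem (transvection_one_mem_normalizer N) hh) 0
  rw [SL_transvection_mul_apply_same, SL_transvection_mul_apply_same, one_mul, one_mul] at hrow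
  have hsum : h 0 0 * h 1 1 + h 0 1 * h 1 0 ∈ (Int.castRingHom ℝ).range := by
    convert sub_mem (sub_mem hrow (row_mul_mem_range_of_mem_normalizer hh 0))
      (row_mul_mem_range_of_mem_normalizer hh 1) using 1
    ring
  refine mem_range_of_mul_mem_of_sq_mem (RingHom.injective_int _) two_ne_zero ?_ ?_
  · have hdet := h.det_coe
    rw [Matrix.det_fin_two] at hdet
    convert add_mem hsum (one_mem _) using 1
    rw [map_ofNat]
    linear_combination hdet
  · rw [mul_pow]
    exact mul_mem (sq_mem_range_of_mem_normalizer hh 0 0) (sq_mem_range_of_mem_normalizer hh 1 1)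

theorem antidiag_mul_mem_range_of_mem_normalizer (hh : h ∈ Subgroup.normalizer (PMGamma N)) :
    h 0 1 * h 1 0 ∈ (Int.castRingHom ℝ).range := by
  have hdet := h.det_coe
  rw [Matrix.det_fin_two] at hdet
  convert sub_mem (diag_mul_mem_range_of_mem_normalizer hh) (one_mem _) using 1
  linear_combination -hdet

theorem mul_mem_range_of_mem_normalizer (hh : h ∈ Subgroup.normalizer (PMGamma N))
    (i j k l : Fin 2) : h i j * h k l ∈ (Int.castRingHom ℝ).range := by
  have hsq := sq_mem_range_of_mem_normalizer hh
  have hrow := row_mul_mem_range_of_mem_normalizer hh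
  have hcol := col_mul_mem_range_of_mem_normalizer hh
  have hdiag := diag_mul_mem_range_of_mem_normalizer hh
  have hanti := antidiag_mul_mem_range_of_mem_normalizer hh
  simp only [sq] at hsq
  fin_cases i <;> fin_cases j <;> fin_cases k <;> fin_cases l <;>
    first
    | apply_assumption
    | rw [mul_comm]; apply_assumption

theorem normalizer_PMGamma (N : ℕ) [NeZero N] :
    Subgroup.normalizer (PMGamma N) = SL2ZtoSL2R.range :=
  le_antisymm
    (fun _ hh => mem_range_map_intCast_of_mul_mem_range (mul_mem_range_of_mem_normalizer hh))
    (range_SL2ZtoSL2R_le_normalizer N)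

end Normalizer

/-- The isomorphism of quotients induced by a pair of surjections `f : G →* H` and `g : G →* K`
along which the two normal subgroups have the same preimage in `G`. -/
noncomputable def quotientEquivOfComapEq {G H K : Type*} [Group G] [Group H] [Group K]
    {f : G →* H} {g : G →* K} (hf : Function.Surjective f) (hg : Function.Surjective g)
    {A : Subgroup H} {B : Subgroup K} [A.Normal] [B.Normal] (h : A.comap f = B.comap g) :
    H ⧸ A ≃* K ⧸ B :=
  (QuotientGroup.liftEquiv (A.comap f) (φ := (QuotientGroup.mk' A).comp f)
      ((QuotientGroup.mk'_surjective A).comp hf)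
      (by rw [← MonoidHom.comap_ker, QuotientGroup.ker_mk'])).symm.trans
    (QuotientGroup.liftEquiv (A.comap f) (φ := (QuotientGroup.mk' B).comp g)
      ((QuotientGroup.mk'_surjective B).comp hg)
      (by rw [← MonoidHom.comap_ker, QuotientGroup.ker_mk', h]))

theorem normalizer_Gamma_quotient_iso_PSL2_general (N : ℕ) [NeZero N] :
    Nonempty
      ((Subgroup.normalizer (PMGamma N) ⧸
          (PMGamma N).subgroupOf (Subgroup.normalizer (PMGamma N))) ≃*
        (Matrix.SpecialLinearGroup (Fin 2) (ZMod N) ⧸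
          Subgroup.zpowers (-1 : Matrix.SpecialLinearGroup (Fin 2) (ZMod N)))) := by
  let toNormalizer : SpecialLinearGroup (Fin 2) ℤ →* Subgroup.normalizer (PMGamma N) :=
    SL2ZtoSL2R.codRestrict _ fun γ => range_SL2ZtoSL2R_le_normalizer N ⟨γ, rfl⟩
  have hsurj : Function.Surjective toNormalizer := by
    rintro ⟨h, hh⟩
    obtain ⟨γ, rfl⟩ := (normalizer_PMGamma N).le hh
    exact ⟨γ, rfl⟩
  exact ⟨quotientEquivOfComapEq hsurj (SL2_map_intCast_zmod_surjective N)
    (comap_SL2ZtoSL2R_PMGamma N)⟩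

/-- For `N ≥ 5`, the quotient of the normalizer in `SL(2, ℝ)` of `±Γ(N)` by `±Γ(N)` is
isomorphic to `PSL(2, ℤ/Nℤ) = SL(2, ℤ/Nℤ)/{±1}`. -/
theorem normalizer_Gamma_quotient_iso_PSL2
    (N : ℕ) (hN : 5 ≤ N) :
    Nonempty
      ((Subgroup.normalizer (PMGamma N) ⧸
          (PMGamma N).subgroupOf (Subgroup.normalizer (PMGamma N))) ≃*
        (Matrix.SpecialLinearGroup (Fin 2) (ZMod N) ⧸
          Subgroup.zpowers (-1 : Matrix.SpecialLinearGroup (Fin 2) (ZMod N)))) := by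
  have : NeZero N := ⟨by omega⟩
  exact normalizer_Gamma_quotient_iso_PSL2_general N
end
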